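/- arXiv:2503.18691 — 2 statements merged into one kernel-verified Lean document; each statement's English description precedes it below -/
import Mathlib

section
/- Fix k ∈ ℕ and a string b = (b₁,…,b_{k−1}) ∈ ℝ^{k−1}. For generic limit-periodic V : ℤ → ℝ (i.e., for every V in some dense Gδ subset of LP(ℤ,ℝ)), the spectrum of the discrete Schrödinger operator H_{V^{[k,b]}} is a Cantor set of zero Hausdorff dimension. -/
/-!
The spectrum of `H_{V^{[k,b]}}` is perfect for limit-periodic `V`, because large almost periods
carry an eigenvector of an isolated point off to infinity. It remains to find, near any periodic
potential, one whose spectrum is covered by finitely many short intervals: such potentials form an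
open set, and a countable intersection of these sets forces the dimension to vanish.

The transfer matrix across the string `b` has vanishing upper left entry only at finitely many
energies. At every other energy `E`, a small periodic perturbation makes the monodromy matrix
hyperbolic and thus opens a gap at `E`; by compactness finitely many perturbations `v_1, …, v_J`
suffice. Now let `W` follow each `v_j` in turn on a long block. If `E` lies in the spectrum for `W`
and in a gap for `v_j`, then approximate eigenvectors are exponentially small around the middle of
the blocks of `v_j`, so cutting the chain there moves the spectrum near `E` by an exponentially
small amount. The cut operator decouples into copies of one finite matrix, whose number of
eigenvalues grows only linearly in the length of the blocks.
-/

open Set MeasureTheory BoundedContinuousFunction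

noncomputable section

/-- ℓ²(ℤ; ℝ). -/
abbrev Ell2 : Type := lp (fun _ : ℤ => ℝ) 2

/-- Spectrum of the discrete Schrödinger operator `H_W = Δ + W` on `ℓ²(ℤ)`:
`E` lies in the spectrum iff `H_W - E` is not a linear bijection of `ℓ²(ℤ)`
(for bounded `W`, by the open mapping theorem this is equivalent to `H_W - E`
not being boundedly invertible). -/
def SchrodingerSpectrum (W : ℤ → ℝ) : Set ℝ :=
  {E : ℝ | ¬ ∃ T : Ell2 ≃ₗ[ℝ] Ell2,
      ∀ f : Ell2, ∀ n : ℤ,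
        (T f) n = f (n - 1) + f (n + 1) + (W n - E) * f n}

/-- A Cantor set of zero Hausdorff dimension: nonempty, compact, without isolated
points, with empty interior, and of Hausdorff dimension zero. -/
def IsZeroDimCantor (s : Set ℝ) : Prop :=
  s.Nonempty ∧ IsCompact s ∧ Preperfect s ∧ interior s = ∅ ∧ dimH s = 0

/-- Periodic bounded sequences. -/
def IsPeriodicSeq {α : Type*} [PseudoMetricSpace α] (W : ℤ →ᵇ α) : Prop :=
  ∃ q : ℕ, 0 < q ∧ ∀ n : ℤ, W (n + q) = W n

/-- The limit-periodic functions `ℤ → ℝ`: uniform limits of periodic functions. -/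
def LPZ : Set (ℤ →ᵇ ℝ) := closure {W : ℤ →ᵇ ℝ | IsPeriodicSeq W}

/-- `V^{[k,b]}`: insert the string `b = (b₁,…,b_{k-1})` between consecutive
entries of `V`; the entry at `n` with `n % k = ℓ ∈ {1,…,k-1}` is `b_ℓ`. -/
def sieveWith (V : ℤ → ℝ) (k : ℕ) (b : Fin (k - 1) → ℝ) : ℤ → ℝ :=
  fun n =>
    if hdvd : (k : ℤ) ∣ n then V (n / k)
    else
      if hk : 0 < k then
        b ⟨(n % (k : ℤ)).toNat - 1, by
          have h1 : 0 ≤ n % (k : ℤ) := Int.emod_nonneg n (by exact_mod_cast hk.ne')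
          have h2 : n % (k : ℤ) < (k : ℤ) := Int.emod_lt_of_pos n (by exact_mod_cast hk)
          have h3 : n % (k : ℤ) ≠ 0 := fun h0 => hdvd (Int.dvd_of_emod_eq_zero h0)
          omega⟩
      else 0

open Filter Topology
open scoped InnerProductSpace Polynomial

section SelfAdjoint

theorem sq_notMem_spectrum_sq {R A : Type*} [CommRing R] [Ring A] [Algebra R A] {x : A} {t : R}
    (ht : t ∉ spectrum R x) (ht' : -t ∉ spectrum R x) : t ^ 2 ∉ spectrum R (x ^ 2) := by
  rw [spectrum.notMem_iff] at *
  have factor : algebraMap R A (t ^ 2) - x ^ 2 =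
      -((algebraMap R A t - x) * (algebraMap R A (-t) - x)) := by
    simp only [map_mul, map_neg, sub_mul, mul_sub, mul_neg, Algebra.commutes t x, sq]
    abel
  rw [factor]
  exact (ht.mul ht').neg

theorem mem_spectrum_sub_smul_one_iff {R A : Type*} [CommRing R] [Ring A] [Algebra R A] {x : A}
    {t w : R} : w ∈ spectrum R (x - t • 1) ↔ w + t ∈ spectrum R x := by
  rw [← Algebra.algebraMap_eq_smul_one, ← spectrum.sub_singleton_eq]
  simp [sub_eq_iff_eq_add]

variable {X : Type*} [NormedAddCommGroup X] [InnerProductSpace ℝ X] [CompleteSpace X]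
  {A B : X →L[ℝ] X}

theorem isUnit_iff_exists_mul_norm_le (hA : IsSelfAdjoint A) :
    IsUnit A ↔ ∃ c > 0, ∀ x, c * ‖x‖ ≤ ‖A x‖ := by
  rw [ContinuousLinearMap.isUnit_iff_bijective,
    ContinuousLinearMap.bijective_iff_dense_range_and_antilipschitz]
  constructor
  · rintro ⟨-, K, hK⟩
    refine ⟨(K + 1 : ℝ)⁻¹, by positivity, fun x => ?_⟩
    rw [inv_mul_le_iff₀ (by positivity)]
    calc ‖x‖ ≤ K * ‖A x‖ := by simpa using hK.le_mul_dist x 0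
      _ ≤ (K + 1) * ‖A x‖ := by gcongr; linarith
  · rintro ⟨c, hc, h⟩
    have anti : AntilipschitzWith (⟨c⁻¹, by positivity⟩ : NNReal) A :=
      A.antilipschitz_of_bound fun x => (le_inv_mul_iff₀ hc).2 (h x)
    refine ⟨?_, _, anti⟩
    rw [Submodule.topologicalClosure_eq_top_iff, ContinuousLinearMap.IsStarNormal.orthogonal_range
      hA.isStarNormal]
    exact LinearMap.ker_eq_bot.2 anti.injective

theorem isSelfAdjoint_smul_one (t : ℝ) : IsSelfAdjoint (t • (1 : X →L[ℝ] X)) :=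
  (IsSelfAdjoint.all t).smul (.one _)

theorem notMem_spectrum_iff_exists_mul_norm_le (hA : IsSelfAdjoint A) {t : ℝ} :
    t ∉ spectrum ℝ A ↔ ∃ c > 0, ∀ x, c * ‖x‖ ≤ ‖A x - t • x‖ := by
  have hsub : IsSelfAdjoint (A - t • 1) := hA.sub (isSelfAdjoint_smul_one t)
  rw [spectrum.notMem_iff, Algebra.algebraMap_eq_smul_one, ← IsUnit.neg_iff, neg_sub,
    isUnit_iff_exists_mul_norm_le hsub]
  rfl

theorem exists_norm_sub_smul_lt_of_mem_spectrum (hA : IsSelfAdjoint A) {t : ℝ}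
    (ht : t ∈ spectrum ℝ A) {ε : ℝ} (hε : 0 < ε) : ∃ x, ‖x‖ = 1 ∧ ‖A x - t • x‖ < ε := by
  by_contra! h
  refine (notMem_spectrum_iff_exists_mul_norm_le hA).2 ⟨ε, hε, fun x => ?_⟩ ht
  rcases eq_or_ne x 0 with rfl | hx
  · simp
  · have := h (‖x‖⁻¹ • x) (norm_smul_inv_norm hx)
    rwa [map_smul, smul_comm t, ← smul_sub, norm_smul, norm_inv, norm_norm,
      le_inv_mul_iff₀ (norm_pos_iff.2 hx), mul_comm] at this

theorem isPositive_add_smul_one_iff (hA : IsSelfAdjoint A) {t : ℝ} :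
    (A + t • 1).IsPositive ↔ ∀ x, 0 ≤ ⟪A x, x⟫_ℝ + t * ‖x‖ ^ 2 := by
  have hsum : IsSelfAdjoint (A + t • 1) := hA.add (isSelfAdjoint_smul_one t)
  simp [ContinuousLinearMap.isPositive_def', hsum, ContinuousLinearMap.reApplyInnerSelf_apply,
    inner_add_left, real_inner_smul_left]

theorem exists_isPositive_add_neg_smul_one (hA : A.IsPositive) (hu : IsUnit A) :
    ∃ d > (0 : ℝ), (A + -d • 1).IsPositive := by
  obtain ⟨c, hc, hbelow⟩ := (isUnit_iff_exists_mul_norm_le hA.isSelfAdjoint).1 hu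
  set K : ℝ := ‖A‖ + 1
  have hK : 0 < K := by positivity
  refine ⟨c ^ 2 / K, by positivity, (isPositive_add_smul_one_iff hA.isSelfAdjoint).2 fun x => ?_⟩
  -- Cauchy-Schwarz for the form of `A`: evaluate it at `x - A x / K` with `K ≥ ‖A‖`.
  have form_nonneg := hA.inner_nonneg_left (x - K⁻¹ • A x)
  have form_image_le : ⟪A (A x), A x⟫_ℝ ≤ K * ‖A x‖ ^ 2 := by
    calc ⟪A (A x), A x⟫_ℝ ≤ ‖A (A x)‖ * ‖A x‖ := real_inner_le_norm _ _
      _ ≤ (K * ‖A x‖) * ‖A x‖ := by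
        gcongr
        exact (A.le_opNorm _).trans (by gcongr; simp [K])
      _ = K * ‖A x‖ ^ 2 := by ring
  have inner_symm : ⟪A (A x), x⟫_ℝ = ‖A x‖ ^ 2 :=
    (hA.isSymmetric (A x) x).trans (real_inner_self_eq_norm_sq _)
  simp only [map_sub, map_smul, inner_sub_left, inner_sub_right, real_inner_smul_left,
    real_inner_smul_right, inner_symm, real_inner_self_eq_norm_sq] at form_nonneg
  have : c ^ 2 / K * ‖x‖ ^ 2 ≤ ⟪A x, x⟫_ℝ :=
    calc c ^ 2 / K * ‖x‖ ^ 2 = K⁻¹ * (c * ‖x‖) ^ 2 := by ring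
      _ ≤ K⁻¹ * ‖A x‖ ^ 2 := by gcongr; exact hbelow x
      _ = 2 * (K⁻¹ * ‖A x‖ ^ 2) - K⁻¹ * (K⁻¹ * (K * ‖A x‖ ^ 2)) := by field_simp; ring
      _ ≤ 2 * (K⁻¹ * ‖A x‖ ^ 2) - K⁻¹ * (K⁻¹ * ⟪A (A x), A x⟫_ℝ) := by gcongr
      _ ≤ ⟪A x, x⟫_ℝ := by linarith
  linarith

theorem isPositive_of_spectrum_nonneg (hA : IsSelfAdjoint A)
    (h : ∀ t ∈ spectrum ℝ A, 0 ≤ t) : A.IsPositive := by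
  set S : Set ℝ := {t | 0 ≤ t ∧ (A + t • 1).IsPositive}
  have closed_S : IsClosed S := by
    simp only [S, isPositive_add_smul_one_iff hA, ofPred_and, ofPred_forall]
    exact isClosed_Ici.inter <| isClosed_iInter fun x =>
      isClosed_le (by fun_prop) (by fun_prop)
  have norm_mem : ‖A‖ ∈ S := by
    refine ⟨norm_nonneg A, (isPositive_add_smul_one_iff hA).2 fun x => ?_⟩
    have := (abs_le.1 (abs_real_inner_le_norm (A x) x)).1
    nlinarith [A.le_opNorm x, norm_nonneg x]
  have bdd_S : BddBelow S := ⟨0, fun t ht => ht.1⟩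
  set t₀ := sInf S
  have inf_mem : t₀ ∈ S := closed_S.csInf_mem ⟨_, norm_mem⟩ bdd_S
  have t₀_pos : ¬ 0 < t₀ := by
    intro hpos
    have hu : IsUnit (A + t₀ • 1) := by
      have : -t₀ ∉ spectrum ℝ A := fun hmem => (h _ hmem).not_gt (neg_neg_iff_pos.2 hpos)
      rwa [spectrum.notMem_iff, ← IsUnit.neg_iff, neg_sub, map_neg, sub_neg_eq_add,
        Algebra.algebraMap_eq_smul_one] at this
    obtain ⟨d, hd, hpositive⟩ := exists_isPositive_add_neg_smul_one inf_mem.2 hu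
    have smaller_mem : max 0 (t₀ - d) ∈ S := by
      refine ⟨le_max_left _ _, ?_⟩
      rw [add_assoc, ← add_smul] at hpositive
      convert hpositive.add (ContinuousLinearMap.isPositive_one.smul_of_nonneg
        (sub_nonneg.2 (le_max_right 0 (t₀ - d)))) using 1
      rw [add_assoc, ← add_smul]
      ring_nf
    exact (csInf_le bdd_S smaller_mem).not_gt (max_lt hpos (by linarith))
  simpa [le_antisymm (not_lt.1 t₀_pos) inf_mem.1] using inf_mem.2

theorem isPositive_sq (hA : IsSelfAdjoint A) : (A ^ 2).IsPositive := by
  simpa [sq, ← ContinuousLinearMap.star_eq_adjoint, hA.star_eq] using!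
    ContinuousLinearMap.isPositive_self_comp_adjoint A

theorem nonneg_of_mem_spectrum_sq (hA : IsSelfAdjoint A) {t : ℝ} (ht : t ∈ spectrum ℝ (A ^ 2)) :
    0 ≤ t :=
  SpectrumRestricts.nnreal_iff.1 (isPositive_sq hA).spectrumRestricts t ht

theorem mul_norm_le_of_disjoint_spectrum_ball (hA : IsSelfAdjoint A) {t r : ℝ}
    (h : Disjoint (spectrum ℝ A) (Metric.ball t r)) (x : X) : r * ‖x‖ ≤ ‖A x - t • x‖ := by
  rcases le_or_gt r 0 with hr | hr
  · exact (mul_nonpos_of_nonpos_of_nonneg hr (norm_nonneg x)).trans (norm_nonneg _)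
  set C : X →L[ℝ] X := A - t • 1
  have hC : IsSelfAdjoint C := hA.sub (isSelfAdjoint_smul_one t)
  have notMem_spectrum_C {w : ℝ} (hw : |w| < r) : w ∉ spectrum ℝ C := fun hmem =>
    h.notMem_of_mem_left (mem_spectrum_sub_smul_one_iff.1 hmem) (by simpa using hw)
  have spectrum_nonneg : ∀ u ∈ spectrum ℝ (C ^ 2 - r ^ 2 • 1), 0 ≤ u := by
    intro u hu
    rw [mem_spectrum_sub_smul_one_iff] at hu
    by_contra! hneg
    have hsqrt : √(u + r ^ 2) < r := (Real.sqrt_lt' hr).2 (by linarith)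
    have habs : |√(u + r ^ 2)| < r := by rwa [abs_of_nonneg (Real.sqrt_nonneg _)]
    have := sq_notMem_spectrum_sq (notMem_spectrum_C habs) (notMem_spectrum_C (by rwa [abs_neg]))
    rw [Real.sq_sqrt (nonneg_of_mem_spectrum_sq hC hu)] at this
    exact this hu
  have hpos := (isPositive_of_spectrum_nonneg ((hC.pow 2).sub (isSelfAdjoint_smul_one _))
    spectrum_nonneg).inner_nonneg_left x
  have inner_sq : ⟪(C ^ 2) x, x⟫_ℝ = ‖C x‖ ^ 2 := by
    rw [sq, mul_apply_eq_comp, ← real_inner_self_eq_norm_sq]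
    exact hC.isSymmetric (C x) x
  rw [_root_.sub_apply, inner_sub_left, inner_sq] at hpos
  simp only [_root_.smul_apply, one_apply_eq_self, real_inner_smul_left,
    real_inner_self_eq_norm_sq] at hpos
  exact (sq_le_sq₀ (by positivity) (norm_nonneg (C x))).1 (by linarith)

theorem exists_mem_spectrum_abs_sub_lt (hA : IsSelfAdjoint A) {x : X} (hx : ‖x‖ = 1) {t r : ℝ}
    (h : ‖A x - t • x‖ < r) : ∃ s ∈ spectrum ℝ A, |s - t| < r := by
  by_contra! hfar
  have hdisj : Disjoint (spectrum ℝ A) (Metric.ball t r) :=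
    Set.disjoint_left.2 fun s hs hball => (hfar s hs).not_gt hball
  have := mul_norm_le_of_disjoint_spectrum_ball hA hdisj x
  rw [hx, mul_one] at this
  exact this.not_gt h

theorem spectrum_nonempty_of_isSelfAdjoint [Nontrivial X] (hA : IsSelfAdjoint A) :
    (spectrum ℝ A).Nonempty := by
  obtain ⟨x, hx⟩ := exists_norm_eq X zero_le_one
  obtain ⟨s, hs, -⟩ := exists_mem_spectrum_abs_sub_lt hA hx (t := 0) (lt_add_one _)
  exact ⟨s, hs⟩

theorem mul_norm_apply_le_of_isolated_zero (hA : IsSelfAdjoint A) {r : ℝ} (hr : 0 < r)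
    (h : spectrum ℝ A ∩ Metric.ball 0 r ⊆ {0}) (x : X) : r * ‖A x‖ ≤ ‖A (A x)‖ := by
  have hdisj : Disjoint (spectrum ℝ (A ^ 2)) (Metric.ball (r ^ 2 / 2) (r ^ 2 / 2)) := by
    refine Set.disjoint_left.2 fun u hu hball => ?_
    obtain ⟨hu0, hur⟩ := abs_lt.1 (show |u - r ^ 2 / 2| < r ^ 2 / 2 from hball)
    have hsqrt_pos : 0 < √u := Real.sqrt_pos.2 (by linarith)
    have hsqrt_lt : √u < r := (Real.sqrt_lt' hr).2 (by linarith)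
    have notMem {w : ℝ} (hw : |w| = √u) : w ∉ spectrum ℝ A := fun hmem => by
      have hw0 : w = 0 := h ⟨hmem, by simpa [hw] using hsqrt_lt⟩
      rw [hw0, abs_zero] at hw
      exact hsqrt_pos.ne hw
    have := sq_notMem_spectrum_sq (notMem (abs_of_pos hsqrt_pos))
      (notMem (by rw [abs_neg, abs_of_pos hsqrt_pos]))
    rw [Real.sq_sqrt (by linarith)] at this
    exact this hu
  have resolvent_bound := mul_norm_le_of_disjoint_spectrum_ball (hA.pow 2) hdisj x
  have hsq : (A ^ 2) x = A (A x) := by rw [sq, mul_apply_eq_comp]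
  have inner_sq : ⟪A (A x), x⟫_ℝ = ‖A x‖ ^ 2 :=
    (hA.isSymmetric (A x) x).trans (real_inner_self_eq_norm_sq _)
  have squared : (r ^ 2 / 2 * ‖x‖) ^ 2 ≤ ‖A (A x) - (r ^ 2 / 2) • x‖ ^ 2 := by
    rw [← hsq]; gcongr
  rw [norm_sub_sq_real, real_inner_smul_right, inner_sq, norm_smul, Real.norm_eq_abs,
    abs_of_pos (by positivity : 0 < r ^ 2 / 2)] at squared
  exact (sq_le_sq₀ (by positivity) (norm_nonneg _)).1 (by linarith)

theorem exists_mem_ker_mul_norm_sub_le (hA : IsSelfAdjoint A) {r : ℝ}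
    (h : ∀ x, r * ‖A x‖ ≤ ‖A (A x)‖) (x : X) :
    ∃ p ∈ A.ker, r * ‖x - p‖ ≤ ‖A x‖ := by
  have : CompleteSpace A.ker := A.isClosed_ker.completeSpace_coe
  obtain ⟨p, hp, z, hz, rfl⟩ := A.ker.exists_add_mem_mem_orthogonal x
  rw [A.orthogonal_ker, ← ContinuousLinearMap.star_eq_adjoint, hA.star_eq] at hz
  have bound_z : r * ‖z‖ ≤ ‖A z‖ := by
    have hclosed : IsClosed {z : X | r * ‖z‖ ≤ ‖A z‖} := isClosed_le (by fun_prop) (by fun_prop)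
    refine closure_minimal ?_ hclosed (show z ∈ closure (A.range : Set X) from hz)
    rintro _ ⟨y, rfl⟩
    exact h y
  have apply_p : A p = 0 := hp
  exact ⟨p, hp, by rwa [add_sub_cancel_left, map_add, apply_p, zero_add]⟩

theorem exists_eigenvector_of_isolated (hA : IsSelfAdjoint A) {t r : ℝ} (hr : 0 < r)
    (ht : t ∈ spectrum ℝ A) (h : spectrum ℝ A ∩ Metric.ball t r ⊆ {t}) :
    (∃ x, ‖x‖ = 1 ∧ A x = t • x) ∧ ∀ x, ∃ p, A p = t • p ∧ r * ‖x - p‖ ≤ ‖A x - t • x‖ := by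
  have hB : IsSelfAdjoint (A - t • 1) := hA.sub (isSelfAdjoint_smul_one t)
  have isolated_zero : spectrum ℝ (A - t • 1) ∩ Metric.ball 0 r ⊆ {0} := by
    rintro w ⟨hw, hball⟩
    have := h ⟨mem_spectrum_sub_smul_one_iff.1 hw, by simpa using hball⟩
    simpa using this
  have near_ker (x : X) : ∃ p, A p = t • p ∧ r * ‖x - p‖ ≤ ‖A x - t • x‖ := by
    obtain ⟨p, hp, hxp⟩ := exists_mem_ker_mul_norm_sub_le hB
      (mul_norm_apply_le_of_isolated_zero hB hr isolated_zero) x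
    exact ⟨p, by simpa [sub_eq_zero] using hp, hxp⟩
  refine ⟨?_, near_ker⟩
  by_contra! hno
  refine (notMem_spectrum_iff_exists_mul_norm_le hA).2 ⟨r, hr, fun x => ?_⟩ ht
  obtain ⟨p, hp, hxp⟩ := near_ker x
  have hp0 : p = 0 := by
    by_contra hp0
    exact hno (‖p‖⁻¹ • p) (norm_smul_inv_norm hp0) (by rw [map_smul, hp, smul_comm])
  rwa [hp0, sub_zero] at hxp

end SelfAdjoint

section Operators

theorem norm_smul_id_le (U : ℤ →ᵇ ℝ) (n : ℤ) : ‖U n • ContinuousLinearMap.id ℝ ℝ‖ ≤ ‖U‖ := by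
  rw [norm_smul, ContinuousLinearMap.norm_id, mul_one]
  exact U.norm_coe_le_norm n

/-- Multiplication by a bounded sequence on `ℓ²(ℤ)`. -/
def mulOp (U : ℤ →ᵇ ℝ) : Ell2 →L[ℝ] Ell2 :=
  lp.mapCLM 2 (fun n => U n • ContinuousLinearMap.id ℝ ℝ) (norm_nonneg U) (norm_smul_id_le U)

@[simp]
theorem mulOp_apply (U : ℤ →ᵇ ℝ) (f : Ell2) (n : ℤ) : mulOp U f n = U n * f n := rfl

theorem norm_mulOp_le (U : ℤ →ᵇ ℝ) : ‖mulOp U‖ ≤ ‖U‖ :=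
  lp.norm_mapCLM_le 2 _ (norm_nonneg U) (norm_smul_id_le U)

theorem hasSum_sq_apply (f : Ell2) : HasSum (fun n => f n ^ 2) (‖f‖ ^ 2) := by
  simpa using lp.hasSum_norm (p := 2) (by simp) f

/-- Translation `f ↦ f (· + a)` as an isometry of `ℓ²(ℤ)`. -/
def shiftIsometry (a : ℤ) : Ell2 →ₗᵢ[ℝ] Ell2 where
  toFun f := ⟨fun n => f (n + a), memℓp_gen <| by
    simpa [Function.comp_def] using
      (Equiv.addRight a).summable_iff.2 (hasSum_sq_apply f).summable⟩
  map_add' _ _ := rfl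
  map_smul' _ _ := rfl
  norm_map' f := by
    rw [← sq_eq_sq₀ (norm_nonneg _) (norm_nonneg _), ← (hasSum_sq_apply f).tsum_eq,
      ← (hasSum_sq_apply _).tsum_eq]
    exact (Equiv.addRight a).tsum_eq fun n => f n ^ 2

/-- Translation as a bounded operator on `ℓ²(ℤ)`. -/
def shift (a : ℤ) : Ell2 →L[ℝ] Ell2 :=
  (shiftIsometry a).toContinuousLinearMap

@[simp]
theorem shift_apply (a : ℤ) (f : Ell2) (n : ℤ) : shift a f n = f (n + a) := rfl

@[simp]
theorem norm_shift_apply (a : ℤ) (f : Ell2) : ‖shift a f‖ = ‖f‖ :=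
  (shiftIsometry a).norm_map f

theorem norm_shift_le (a : ℤ) : ‖shift a‖ ≤ 1 :=
  LinearIsometry.norm_toContinuousLinearMap_le _

theorem isSelfAdjoint_mulOp (U : ℤ →ᵇ ℝ) : IsSelfAdjoint (mulOp U) := by
  rw [ContinuousLinearMap.isSelfAdjoint_iff_isSymmetric]
  intro f g
  simp only [ContinuousLinearMap.coe_coe, lp.inner_eq_tsum, mulOp_apply]
  exact tsum_congr fun n => by simp; ring

theorem star_shift (a : ℤ) : star (shift a) = shift (-a) := by
  rw [ContinuousLinearMap.star_eq_adjoint]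
  refine ((ContinuousLinearMap.eq_adjoint_iff _ _).2 fun f g => ?_).symm
  rw [lp.inner_eq_tsum, lp.inner_eq_tsum, ← (Equiv.addRight a).tsum_eq]
  simp

/-- The Jacobi operator with potential `U` and weight `a n` on the bond `(n, n + 1)`. -/
def jacobi (a U : ℤ →ᵇ ℝ) : Ell2 →L[ℝ] Ell2 :=
  mulOp a * shift 1 + star (mulOp a * shift 1) + mulOp U

theorem jacobi_apply (a U : ℤ →ᵇ ℝ) (f : Ell2) (n : ℤ) :
    jacobi a U f n = a n * f (n + 1) + a (n - 1) * f (n - 1) + U n * f n := by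
  rw [jacobi, star_mul, star_shift, (isSelfAdjoint_mulOp a).star_eq]
  rfl

theorem isSelfAdjoint_jacobi (a U : ℤ →ᵇ ℝ) : IsSelfAdjoint (jacobi a U) :=
  (IsSelfAdjoint.add_star_self _).add (isSelfAdjoint_mulOp U)

/-- The discrete Schrödinger operator `Δ + U` as a bounded operator. -/
def schrodinger (U : ℤ →ᵇ ℝ) : Ell2 →L[ℝ] Ell2 :=
  jacobi 1 U

theorem schrodinger_apply (U : ℤ →ᵇ ℝ) (f : Ell2) (n : ℤ) :
    schrodinger U f n = f (n - 1) + f (n + 1) + U n * f n := by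
  simp only [schrodinger, jacobi_apply, coe_one, Pi.one_apply, one_mul]
  ring

theorem isSelfAdjoint_schrodinger (U : ℤ →ᵇ ℝ) : IsSelfAdjoint (schrodinger U) :=
  isSelfAdjoint_jacobi 1 U

theorem schrodingerSpectrum_eq (U : ℤ →ᵇ ℝ) :
    SchrodingerSpectrum U = spectrum ℝ (schrodinger U) := by
  ext E
  have apply_sub (f : Ell2) (n : ℤ) :
      (schrodinger U - E • 1) f n = f (n - 1) + f (n + 1) + (U n - E) * f n := by
    have : (schrodinger U - E • 1) f n = schrodinger U f n - E * f n := rfl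
    rw [this, schrodinger_apply]
    ring
  rw [spectrum.mem_iff, Algebra.algebraMap_eq_smul_one, ← IsUnit.neg_iff, neg_sub,
    ContinuousLinearMap.isUnit_iff_bijective]
  refine not_congr ⟨fun ⟨T, hT⟩ => ?_, fun hbij => ?_⟩
  · have : ⇑T = ⇑(schrodinger U - E • 1) := funext fun f => lp.ext <| funext fun n =>
      (hT f n).trans (apply_sub f n).symm
    exact this ▸ T.bijective
  · exact ⟨LinearEquiv.ofBijective (schrodinger U - E • 1).toLinearMap hbij, apply_sub⟩

theorem lipschitzWith_schrodinger : LipschitzWith 1 schrodinger := by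
  refine .of_dist_le_mul fun U U' => ?_
  have : schrodinger U - schrodinger U' = mulOp (U - U') := by
    ext f n
    simp [schrodinger_apply, sub_mul]
  rw [NNReal.coe_one, one_mul, dist_eq_norm, dist_eq_norm, this]
  exact norm_mulOp_le _

theorem tendsto_apply_cofinite (f : Ell2) : Tendsto f cofinite (𝓝 0) := by
  have hsq := (hasSum_sq_apply f).summable.tendsto_cofinite_zero
  simpa [tendsto_zero_iff_abs_tendsto_zero, Function.comp_def, Real.sqrt_sq_eq_abs]
    using hsq.sqrt

end Operators

section AlmostPeriods

/-- `U` has arbitrarily large almost periods of every quality. -/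
def HasLargeAlmostPeriods (U : ℤ → ℝ) : Prop :=
  ∀ ε > 0, ∃ᶠ a : ℤ in cofinite, ∀ n, |U (n + a) - U n| ≤ ε

variable {U : ℤ →ᵇ ℝ} {E : ℝ} {f : Ell2}

theorem eq_zero_of_schrodinger_eigenvector (hf : schrodinger U f = E • f) (h0 : f 0 = 0)
    (h1 : f 1 = 0) : f = 0 := by
  have recurrence (n : ℤ) : f (n - 1) + f (n + 1) + U n * f n = E * f n := by
    rw [← schrodinger_apply, hf]
    rfl
  have consecutive (n : ℤ) : f n = 0 ∧ f (n + 1) = 0 := by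
    induction n with
    | zero => exact ⟨h0, h1⟩
    | succ n ih => exact ⟨ih.2, by simpa [ih] using recurrence (n + 1)⟩
    | pred n ih => exact ⟨by simpa [ih] using recurrence (-n), by simpa using ih.1⟩
  exact lp.ext <| funext fun n => (consecutive n).1

theorem exists_norm_le_of_schrodinger_eigenvector (U : ℤ →ᵇ ℝ) (E : ℝ) :
    ∃ C ≥ 0, ∀ f : Ell2, schrodinger U f = E • f → ‖f‖ ≤ C * max |f 0| |f 1| := by
  set K := (schrodinger U - E • 1).ker
  have mem_K {f : Ell2} : f ∈ K ↔ schrodinger U f = E • f := by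
    simp [K, sub_eq_zero]
  let values : K →ₗ[ℝ] ℝ × ℝ :=
    { toFun := fun f => ((f : Ell2) 0, (f : Ell2) 1)
      map_add' := fun _ _ => rfl
      map_smul' := fun _ _ => rfl }
  have values_injective : Function.Injective values := by
    rw [injective_iff_map_eq_zero]
    intro f hf
    exact Subtype.ext <| eq_zero_of_schrodinger_eigenvector (mem_K.1 f.2)
      (congrArg Prod.fst hf) (congrArg Prod.snd hf)
  have : FiniteDimensional ℝ K := .of_injective values values_injective
  obtain ⟨C, -, anti⟩ := values.exists_antilipschitzWith (LinearMap.ker_eq_bot.2 values_injective)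
  refine ⟨C, C.2, fun f hf => ?_⟩
  simpa using! anti.le_mul_dist ⟨f, mem_K.2 hf⟩ 0

theorem norm_schrodinger_shift_sub_le (hf : schrodinger U f = E • f) {a : ℤ} {ε : ℝ}
    (hε : 0 ≤ ε) (ha : ∀ n, |U (n + a) - U n| ≤ ε) :
    ‖schrodinger U (shift a f) - E • shift a f‖ ≤ ε * ‖f‖ := by
  have residual (n : ℤ) : (schrodinger U (shift a f) - E • shift a f) n =
      -((U (n + a) - U n) * f (n + a)) := by
    have eigen : schrodinger U f (n + a) = E * f (n + a) := by rw [hf]; rfl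
    have : (schrodinger U (shift a f) - E • shift a f) n =
      schrodinger U (shift a f) n - E * f (n + a) := rfl
    rw [this, ← eigen, schrodinger_apply, schrodinger_apply]
    simp only [shift_apply, sub_add_eq_add_sub, add_right_comm _ 1 a]
    ring
  calc _ ≤ ‖ε • shift a f‖ := lp.norm_mono two_ne_zero fun n => by
        rw [residual, norm_neg, norm_mul]
        simpa [abs_of_nonneg hε] using mul_le_mul_of_nonneg_right (ha n) (abs_nonneg _)
    _ = ε * ‖f‖ := by rw [norm_smul, norm_shift_apply, Real.norm_of_nonneg hε]

theorem exists_inter_ball_subset_singleton {X : Type*} [PseudoMetricSpace X] {s : Set X} {x : X}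
    (h : ¬ AccPt x (𝓟 s)) : ∃ r > 0, s ∩ Metric.ball x r ⊆ {x} := by
  rw [accPt_iff_nhds] at h
  push Not at h
  obtain ⟨S, hS, hunique⟩ := h
  obtain ⟨r, hr, hrS⟩ := Metric.mem_nhds_iff.1 hS
  exact ⟨r, hr, fun t ht => hunique t ⟨hrS ht.2, ht.1⟩⟩

-- An isolated spectral value would be an eigenvalue of finite multiplicity, but the translates
-- of an eigenvector by large almost periods are almost eigenvectors running off to infinity.
theorem preperfect_spectrum_schrodinger (hU : HasLargeAlmostPeriods U) :
    Preperfect (spectrum ℝ (schrodinger U)) := by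
  intro E hE
  by_contra hacc
  obtain ⟨r, hr, hisolated⟩ := exists_inter_ball_subset_singleton hacc
  obtain ⟨⟨f, hf1, hf⟩, near_eigenspace⟩ :=
    exists_eigenvector_of_isolated (isSelfAdjoint_schrodinger U) hr hE hisolated
  obtain ⟨C, hC, norm_le⟩ := exists_norm_le_of_schrodinger_eigenvector U E
  set δ : ℝ := 1 / (2 * C + 2)
  have hδ : 0 < δ := by positivity
  obtain ⟨a, ha, ha0, ha1⟩ : ∃ a : ℤ, (∀ n, |U (n + a) - U n| ≤ r * δ) ∧
      |f (0 + a)| < δ ∧ |f (1 + a)| < δ := by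
    have small (m : ℤ) : ∀ᶠ a in cofinite, |f (m + a)| < δ := by
      have := (tendsto_apply_cofinite f).comp (add_right_injective m).tendsto_cofinite
      simpa using! this.abs.eventually_lt_const (by simpa using hδ)
    exact ((hU (r * δ) (by positivity)).and_eventually ((small 0).and (small 1))).exists
  obtain ⟨p, hp, hgp⟩ := near_eigenspace (shift a f)
  have dist_le : ‖shift a f - p‖ ≤ δ := by
    have := norm_schrodinger_shift_sub_le hf (by positivity) ha
    rw [hf1, mul_one] at this
    exact le_of_mul_le_mul_left (hgp.trans this) hr
  have apply_p_le {m : ℤ} (hm : |f (m + a)| < δ) : |p m| ≤ 2 * δ := by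
    have h1 : |f (m + a) - p m| ≤ δ :=
      (lp.norm_apply_le_norm two_ne_zero (shift a f - p) m).trans dist_le
    linarith [abs_sub_abs_le_abs_sub (p m) (f (m + a)), abs_sub_comm (p m) (f (m + a))]
  have norm_p_ge : 1 - δ ≤ ‖p‖ := by
    have := norm_sub_norm_le (shift a f) p
    rw [norm_shift_apply, hf1] at this
    linarith
  have norm_p_le : ‖p‖ ≤ C * (2 * δ) :=
    (norm_le p hp).trans (by gcongr; exact max_le (apply_p_le ha0) (apply_p_le ha1))
  have : δ * (2 * C + 2) = 1 := one_div_mul_cancel (by positivity)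
  linarith

end AlmostPeriods

section ShearWords

variable {R S : Type*} [CommRing R] [CommRing S]

/-- The lower unipotent matrix with off-diagonal entry `v`. -/
def shear (v : R) : Matrix (Fin 2) (Fin 2) R := !![1, 0; v, 1]

theorem shear_add (v w : R) : shear (v + w) = shear v * shear w := by
  simp [shear]

theorem det_shear (v : R) : (shear v).det = 1 := by
  simp [shear]

/-- The word `(C * shear (v (n + l - 1))) * ⋯ * (C * shear (v n))`. The `2 × 2` transfer matrices
of a Schrödinger operator and of its sieved versions all have this form. -/
def shearWord (C : Matrix (Fin 2) (Fin 2) R) (v : ℤ → R) (n : ℤ) : ℕ → Matrix (Fin 2) (Fin 2) R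
  | 0 => 1
  | l + 1 => C * shear (v (n + l)) * shearWord C v n l

variable {C : Matrix (Fin 2) (Fin 2) R} {v w : ℤ → R} {n : ℤ} {l : ℕ}

theorem det_shearWord (hC : C.det = 1) (v : ℤ → R) (n : ℤ) (l : ℕ) :
    (shearWord C v n l).det = 1 := by
  induction l with
  | zero => exact Matrix.det_one
  | succ l ih => simp only [shearWord, Matrix.det_mul, hC, det_shear, ih, mul_one]

theorem shearWord_congr (h : ∀ i < l, v (n + i) = w (n + i)) :
    shearWord C v n l = shearWord C w n l := by
  induction l with
  | zero => rfl
  | succ l ih => rw [shearWord, shearWord, h l l.lt_succ_self, ih fun i hi => h i (by lia)]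

theorem shearWord_add (C : Matrix (Fin 2) (Fin 2) R) (v : ℤ → R) (n : ℤ) (a b : ℕ) :
    shearWord C v n (a + b) = shearWord C v (n + a) b * shearWord C v n a := by
  induction b with
  | zero => exact (Matrix.one_mul _).symm
  | succ b ih =>
    rw [← add_assoc, shearWord, ih, shearWord, Nat.cast_add, add_assoc n, Matrix.mul_assoc _ _
      (shearWord C v n a)]

theorem shearWord_succ' (C : Matrix (Fin 2) (Fin 2) R) (v : ℤ → R) (n : ℤ) (l : ℕ) :
    shearWord C v n (l + 1) = shearWord C v (n + 1) l * (C * shear (v n)) := by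
  rw [add_comm, shearWord_add]
  simp [shearWord]

theorem shearWord_add_period {a : ℤ} (hv : Function.Periodic v a) (n : ℤ) (l : ℕ) :
    shearWord C v (n + a) l = shearWord C v n l := by
  induction l with
  | zero => rfl
  | succ l ih => rw [shearWord, shearWord, ih, add_right_comm, hv]

theorem shearWord_period_mul {q : ℕ} (hv : Function.Periodic v q) (n : ℤ) (N : ℕ) :
    shearWord C v n (q * N) = shearWord C v n q ^ N := by
  induction N with
  | zero => rfl
  | succ N ih =>
    rw [Nat.mul_succ, add_comm, shearWord_add, shearWord_add_period hv, ih, pow_succ]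

theorem trace_shearWord_period {q : ℕ} (hv : Function.Periodic v q) (n : ℤ) :
    (shearWord C v n q).trace = (shearWord C v 0 q).trace := by
  have step (n : ℤ) : (shearWord C v (n + 1) q).trace = (shearWord C v n q).trace := by
    cases q with
    | zero => rfl
    | succ l =>
      have hl : v (n + 1 + l) = v n := by rw [← hv n]; push_cast; ring_nf
      rw [shearWord, hl, Matrix.trace_mul_comm, ← shearWord_succ']
  induction n with
  | zero => rfl
  | succ n ih => rw [step, ih]
  | pred n ih => rw [← ih, ← step, sub_add_cancel]

theorem map_shearWord (φ : R →+* S) (C : Matrix (Fin 2) (Fin 2) R) (v : ℤ → R) (n : ℤ) (l : ℕ) :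
    (shearWord C v n l).map φ = shearWord (C.map φ) (φ ∘ v) n l := by
  induction l with
  | zero => simp [shearWord]
  | succ l ih =>
    have hshear (x : R) : (shear x).map φ = shear (φ x) := by
      ext i j
      fin_cases i <;> fin_cases j <;> simp [shear]
    rw [shearWord, Matrix.map_mul, Matrix.map_mul, ih, hshear, shearWord, Function.comp_apply]

/-- The transfer matrix of `Δ` at the energy `x`, so that `freeStep x * shear v` is the one-step
transfer matrix of `Δ + V` across a site where `V` takes the value `v`. -/
def freeStep (x : R) : Matrix (Fin 2) (Fin 2) R := !![x, -1; 1, 0]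

theorem det_freeStep (x : R) : (freeStep x).det = 1 := by
  simp [freeStep]

theorem freeStep_mul_shear (x v : R) : freeStep x * shear v = !![x - v, -1; 1, 0] := by
  simp [freeStep, shear, sub_eq_add_neg]

end ShearWords

section TransferPolynomials

variable {R A X : Type*} [CommRing R] [Ring A] [Algebra R A] [AddCommGroup X] [Module R X]
  [Module A X] [IsScalarTower R A X]

/-- The transfer matrix of `Δ + U` across the sites `n, …, n + l - 1`, with polynomial entries
in the energy. -/
def transferPoly (U : ℤ → R) (n : ℤ) (l : ℕ) : Matrix (Fin 2) (Fin 2) R[X] :=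
  shearWord (freeStep .X) (Polynomial.C ∘ U) n l

theorem det_transferPoly (U : ℤ → R) (n : ℤ) (l : ℕ) : (transferPoly U n l).det = 1 :=
  det_shearWord (det_freeStep _) _ _ _

theorem transferPoly_add_period {U : ℤ → R} {a : ℤ} (hU : Function.Periodic U a) (n : ℤ)
    (l : ℕ) : transferPoly U (n + a) l = transferPoly U n l :=
  shearWord_add_period (hU.comp Polynomial.C) n l

theorem transferPoly_succ_zero (U : ℤ → R) (n : ℤ) (l : ℕ) (j : Fin 2) :
    transferPoly U n (l + 1) 0 j =
      (.X - .C (U (n + l))) * transferPoly U n l 0 j - transferPoly U n l 1 j := by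
  simp [transferPoly, shearWord, freeStep_mul_shear, Matrix.mul_apply, sub_eq_add_neg]

theorem transferPoly_succ_one (U : ℤ → R) (n : ℤ) (l : ℕ) (j : Fin 2) :
    transferPoly U n (l + 1) 1 j = transferPoly U n l 0 j := by
  simp [transferPoly, shearWord, freeStep_mul_shear, Matrix.mul_apply]

theorem map_eval_transferPoly (U : ℤ → R) (n : ℤ) (l : ℕ) (E : R) :
    (transferPoly U n l).map (Polynomial.eval E) = shearWord (freeStep E) U n l := by
  have hfree : (freeStep (Polynomial.X : R[X])).map (Polynomial.evalRingHom E) = freeStep E := by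
    ext i j
    fin_cases i <;> fin_cases j <;> simp [freeStep]
  have := map_shearWord (Polynomial.evalRingHom E) (freeStep .X) (Polynomial.C ∘ U) n l
  rw [hfree] at this
  rwa [show Polynomial.evalRingHom E ∘ Polynomial.C ∘ U = U from funext fun _ =>
    Polynomial.eval_C] at this

theorem transferPoly_degrees [Nontrivial R] (U : ℤ → R) (n : ℤ) (l : ℕ) :
    ((transferPoly U n l 0 0).Monic ∧ (transferPoly U n l 0 0).degree = l) ∧
      (transferPoly U n l 1 0).degree < l := by
  induction l with
  | zero => simp [transferPoly, shearWord]
  | succ l ih =>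
    obtain ⟨⟨hmonic, hdegree⟩, hlt⟩ := ih
    have hlead : ((.X - .C (U (n + l))) * transferPoly U n l 0 0).degree = (l + 1 : ℕ) := by
      rw [hmonic.degree_mul, Polynomial.degree_X_sub_C, hdegree, Nat.cast_succ, add_comm]
    have hl : (l : WithBot ℕ) < (l + 1 : ℕ) := by exact_mod_cast l.lt_succ_self
    have hlower := (hlt.trans hl).trans_eq hlead.symm
    rw [transferPoly_succ_zero, transferPoly_succ_one, hdegree,
      Polynomial.degree_sub_eq_left_of_degree_lt hlower]
    exact ⟨⟨((Polynomial.monic_X_sub_C _).mul hmonic).sub_of_left hlower, hlead⟩, hl⟩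

theorem finite_setOf_transfer_zero_zero_eq_zero [IsDomain R] (U : ℤ → R) (n : ℤ) (l : ℕ) :
    {E | shearWord (freeStep E) U n l 0 0 = 0}.Finite := by
  refine (Polynomial.finite_setOfPred_isRoot (transferPoly_degrees U n l).1.1.ne_zero).subset ?_
  intro E hE
  rwa [Set.mem_ofPred_eq, ← map_eval_transferPoly] at hE

-- The transfer matrix propagates generalized solutions also when the scalar energy is replaced
-- by an operator `T`: it solves the recursion satisfied by the sequence `δ` of functionals.
theorem functional_eq_transferPoly {T : A} {δ : ℤ → X →ₗ[R] R} {U : ℤ → R} {n : ℤ} {l : ℕ}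
    (hδ : ∀ i < l, ∀ f, δ (n + i) (T • f) =
      δ (n + i - 1) f + δ (n + i + 1) f + U (n + i) * δ (n + i) f) (f : X) :
    δ (n + l) f = δ n (Polynomial.aeval T (transferPoly U n l 0 0) • f) +
        δ (n - 1) (Polynomial.aeval T (transferPoly U n l 0 1) • f) ∧
      δ (n + l - 1) f = δ n (Polynomial.aeval T (transferPoly U n l 1 0) • f) +
        δ (n - 1) (Polynomial.aeval T (transferPoly U n l 1 1) • f) := by
  induction l generalizing f with
  | zero => simp [transferPoly, shearWord]
  | succ l ih =>
    replace ih := ih fun i hi => hδ i (by lia)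
    have hrec := hδ l l.lt_succ_self f
    have aeval_smul (p : R[X]) :
        Polynomial.aeval T p • T • f = Polynomial.aeval T (.X * p) • f := by
      rw [mul_comm, map_mul, Polynomial.aeval_X, mul_smul]
    have hC (a : R) (p : R[X]) (m : ℤ) : δ m (Polynomial.aeval T (.C a * p) • f) =
        a * δ m (Polynomial.aeval T p • f) := by
      rw [map_mul, Polynomial.aeval_C, mul_smul, algebraMap_smul, map_smul, smul_eq_mul]
    rw [(ih (T • f)).1, aeval_smul, aeval_smul] at hrec
    simp only [transferPoly_succ_zero, transferPoly_succ_one, sub_mul, map_sub, sub_smul, hC]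
    push_cast
    rw [← add_assoc, add_sub_cancel_right]
    exact ⟨by linear_combination -hrec - (ih f).2 - U (n + l) * (ih f).1, (ih f).1⟩

-- Cayley–Hamilton `M + adj M = tr M`: `M` moves forward and `adj M = M⁻¹` backward by one period.
theorem functional_trace_transferPoly {T : A} {δ : ℤ → X →ₗ[R] R} {U : ℤ → R} {q : ℕ}
    (hU : Function.Periodic U q)
    (hδ : ∀ m f, δ m (T • f) = δ (m - 1) f + δ (m + 1) f + U m * δ m f) (n : ℤ) (f : X) :
    δ n (Polynomial.aeval T (transferPoly U n q).trace • f) = δ (n + q) f + δ (n - q) f := by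
  set M := transferPoly U n q
  have forward := (functional_eq_transferPoly (n := n) (l := q) (fun i _ => hδ _) f).1
  have backward := functional_eq_transferPoly (n := n - q) (l := q) fun i _ => hδ _
  rw [← transferPoly_add_period hU (n - q), sub_add_cancel] at backward
  have compose (p r : R[X]) : Polynomial.aeval T p • Polynomial.aeval T r • f =
      Polynomial.aeval T (p * r) • f := by
    rw [map_mul, mul_smul]
  have hdet : M 0 0 * M 1 1 = 1 + M 0 1 * M 1 0 := by
    linear_combination (Matrix.det_fin_two M).symm.trans (det_transferPoly U n q)
  have inverse : δ n (Polynomial.aeval T (M 1 1) • f) =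
      δ (n - 1) (Polynomial.aeval T (M 0 1) • f) + δ (n - q) f := by
    rw [(backward _).1, (backward _).2]
    simp only [compose]
    rw [hdet, mul_comm (M 1 0), map_add, map_one, add_smul, one_smul, map_add, mul_comm (M 1 1)]
    ring
  rw [forward, Matrix.trace_fin_two, map_add, add_smul, map_add, inverse]
  ring

end TransferPolynomials

section Discriminant

instance isScalarTower_apply_continuousLinearMap {R X : Type*} [CommSemiring R] [AddCommMonoid X]
    [Module R X] [TopologicalSpace X] [ContinuousAdd X] [ContinuousConstSMul R X] :
    IsScalarTower R (X →L[R] X) X :=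
  ⟨fun _ _ _ => rfl⟩

instance nontrivial_ell2 : Nontrivial Ell2 :=
  ⟨lp.single 2 0 1, 0, fun h => by simpa using congrArg (fun f : Ell2 => f 0) h⟩

theorem aeval_trace_transferPoly {U : ℤ →ᵇ ℝ} {q : ℕ} (hU : Function.Periodic U q) :
    Polynomial.aeval (schrodinger U) (transferPoly U 0 q).trace = shift q + shift (-q) := by
  ext f n
  have := functional_trace_transferPoly (T := schrodinger U)
    (δ := lp.evalₗ (𝕜 := ℝ) (fun _ => ℝ) 2) hU (fun m f => schrodinger_apply U f m) n f
  rwa [transferPoly, trace_shearWord_period (hU.comp Polynomial.C)] at this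

theorem abs_trace_le_two_of_mem_spectrum {U : ℤ →ᵇ ℝ} {q : ℕ} (hU : Function.Periodic U q) {E : ℝ}
    (hE : E ∈ spectrum ℝ (schrodinger U)) : |(shearWord (freeStep E) U 0 q).trace| ≤ 2 := by
  have hmem := spectrum.subset_polynomial_aeval (schrodinger U) (transferPoly U 0 q).trace
    (mem_image_of_mem _ hE)
  have heval : (transferPoly U 0 q).trace.eval E = (shearWord (freeStep E) U 0 q).trace := by
    simp only [← map_eval_transferPoly, Matrix.trace_fin_two, Polynomial.eval_add, Matrix.map_apply]
  rw [aeval_trace_transferPoly hU] at hmem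
  simp only [heval] at hmem
  calc _ ≤ ‖shift q + shift (-q)‖ := spectrum.norm_le_norm_of_mem hmem
    _ ≤ 1 + 1 := norm_add_le_of_le (norm_shift_le _) (norm_shift_le _)
    _ = 2 := one_add_one_eq_two

end Discriminant

section CutOperators

/-- The bond weights `1`, except for `0` on the bonds `(n - 1, n)` with `n ≡ c` modulo `q`. -/
def cutWeight (q : ℕ) (c : ℤ) : ℤ →ᵇ ℝ :=
  .ofNormedAddCommGroupDiscrete (fun n => if (q : ℤ) ∣ n + 1 - c then 0 else 1) 1 fun n => by
    split_ifs <;> simp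

theorem cutWeight_apply (q : ℕ) (c n : ℤ) :
    cutWeight q c n = if (q : ℤ) ∣ n + 1 - c then 0 else 1 := rfl

variable {U : ℤ →ᵇ ℝ} {q : ℕ}

theorem jacobi_cutWeight_apply (c : ℤ) (f : Ell2) (n : ℤ) :
    jacobi (cutWeight q c) U f n = (if (q : ℤ) ∣ n - c then 0 else f (n - 1)) +
      (if (q : ℤ) ∣ n + 1 - c then 0 else f (n + 1)) + U n * f n := by
  simp only [jacobi_apply, cutWeight_apply, sub_add_cancel, ite_mul, zero_mul, one_mul]
  ring

/-- Evaluation at `n`, cut off outside of the window `[c, c + q)`. -/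
def windowEval (q : ℕ) (c n : ℤ) : Ell2 →ₗ[ℝ] ℝ :=
  if n ∈ Ico c (c + q) then lp.evalₗ (fun _ => ℝ) 2 n else 0

-- The cut chain decouples into windows of length `q`, each with Dirichlet boundary conditions.
theorem aeval_transferPoly_apply_eq_zero (c : ℤ) (f : Ell2) {n : ℤ} (hn : n ∈ Ico c (c + q)) :
    Polynomial.aeval (jacobi (cutWeight q c) U) (transferPoly U c q 0 0) f n = 0 := by
  set H := jacobi (cutWeight q c) U
  have hδ (i : ℕ) (hi : i < q) (f : Ell2) : windowEval q c (c + i) (H • f) =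
      windowEval q c (c + i - 1) f + windowEval q c (c + i + 1) f +
        U (c + i) * windowEval q c (c + i) f := by
    have h1 : (q : ℤ) ∣ c + i - c ↔ ¬ c + (i : ℤ) - 1 ∈ Ico c (c + q) := by
      rw [add_sub_cancel_left, Int.natCast_dvd_natCast, mem_Ico]
      exact ⟨fun h => by have := Nat.eq_zero_of_dvd_of_lt h hi; lia, fun h => ⟨0, by lia⟩⟩
    have h2 : (q : ℤ) ∣ c + i + 1 - c ↔ ¬ c + (i : ℤ) + 1 ∈ Ico c (c + q) := by
      rw [show c + (i : ℤ) + 1 - c = (i + 1 : ℕ) by push_cast; ring, Int.natCast_dvd_natCast,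
        mem_Ico]
      exact ⟨fun h => by have := Nat.le_of_dvd i.succ_pos h; lia, fun h => ⟨1, by lia⟩⟩
    have h3 : c + (i : ℤ) ∈ Ico c (c + q) := by rw [mem_Ico]; lia
    have := jacobi_cutWeight_apply (U := U) (q := q) c f (c + i)
    simp only [h1, h2, ite_not] at this
    simp only [windowEval, h3, if_true]
    refine this.trans ?_
    split_ifs <;> rfl
  have hboundary (f : Ell2) : windowEval q c (c - 1) f = 0 := by
    simp [windowEval]
  have hfirst (f : Ell2) :
      windowEval q c c (Polynomial.aeval H (transferPoly U c q 0 0) • f) = 0 := by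
    have := (functional_eq_transferPoly hδ f).1
    rw [hboundary, add_zero] at this
    simpa [windowEval] using this.symm
  obtain ⟨i, hi, rfl⟩ : ∃ i < q, n = c + (i : ℕ) := by
    rw [mem_Ico] at hn
    exact ⟨(n - c).toNat, by omega, by omega⟩
  set g : Ell2 := Polynomial.aeval H (transferPoly U c q 0 0) f
  have commute (r : ℝ[X]) : Polynomial.aeval H r • g =
      Polynomial.aeval H (transferPoly U c q 0 0) • (Polynomial.aeval H r • f) :=
    DFunLike.congr_fun ((Commute.all r _).map (Polynomial.aeval H)).eq f
  have := (functional_eq_transferPoly (l := i) (fun j hj => hδ j (hj.trans hi)) g).1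
  rw [hboundary, add_zero, commute, hfirst] at this
  rwa [windowEval, if_pos hn] at this

theorem aeval_transferPoly_cut (hU : Function.Periodic U q) (hq : 0 < q) (c : ℤ) :
    Polynomial.aeval (jacobi (cutWeight q c) U) (transferPoly U c q 0 0) = 0 := by
  ext f n
  set a : ℤ := (n - c) / q * q
  have hweight : cutWeight q c = cutWeight q (c + a) := by
    ext m
    have : (q : ℤ) ∣ m + 1 - c ↔ (q : ℤ) ∣ m + 1 - (c + a) := by
      rw [← sub_sub]
      exact (dvd_sub_left (Dvd.intro_left _ rfl)).symm
    simp only [cutWeight_apply, this]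
  have hmem : n ∈ Ico (c + a) (c + a + q) := by
    have h1 := Int.emod_add_ediv_mul (n - c) q
    have h2 := Int.emod_nonneg (n - c) (by lia : (q : ℤ) ≠ 0)
    have h3 := Int.emod_lt_of_pos (n - c) (by lia : (0 : ℤ) < q)
    exact ⟨by lia, by lia⟩
  rw [← transferPoly_add_period (hU.int_mul ((n - c) / q)), hweight]
  exact aeval_transferPoly_apply_eq_zero (c + a) f hmem

theorem exists_finset_spectrum_cut_subset (hU : Function.Periodic U q) (hq : 0 < q) (c : ℤ) :
    ∃ S : Finset ℝ, S.card ≤ q ∧ spectrum ℝ (jacobi (cutWeight q c) U) ⊆ S := by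
  obtain ⟨⟨hmonic, hdegree⟩, -⟩ := transferPoly_degrees U c q
  set p := transferPoly U c q 0 0
  refine ⟨p.roots.toFinset, ?_, fun E hE => ?_⟩
  · calc _ ≤ p.natDegree := p.roots.toFinset_card_le.trans p.card_roots'
      _ = q := Polynomial.natDegree_eq_of_degree_eq_some hdegree
  · have hmem := spectrum.subset_polynomial_aeval _ p (mem_image_of_mem _ hE)
    rw [aeval_transferPoly_cut hU hq, spectrum.zero_eq, mem_singleton_iff] at hmem
    simpa [hmonic.ne_zero] using hmem

end CutOperators

section HyperbolicWords

variable {C : Matrix (Fin 2) (Fin 2) ℝ} {v : ℤ → ℝ} {n : ℤ} {l : ℕ}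

theorem shearWord_update_first (C : Matrix (Fin 2) (Fin 2) ℝ) (v : ℤ → ℝ) (n : ℤ) (s : ℝ)
    (l : ℕ) : shearWord C (Function.update v n (v n + s)) n (l + 1) =
      shearWord C v n (l + 1) * shear s := by
  have htail : shearWord C (Function.update v n (v n + s)) (n + 1) l = shearWord C v (n + 1) l :=
    shearWord_congr fun i _ => Function.update_of_ne (by lia) _ _
  rw [shearWord_succ', htail, Function.update_self, shear_add, shearWord_succ']
  simp only [Matrix.mul_assoc]

theorem shearWord_update_last (hC : C.det = 1) (v : ℤ → ℝ) (n : ℤ) (t : ℝ) (l : ℕ) :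
    shearWord C (Function.update v (n + l) (v (n + l) + t)) n (l + 1) =
      C * shear t * C.adjugate * shearWord C v n (l + 1) := by
  have hinit : shearWord C (Function.update v (n + l) (v (n + l) + t)) n l = shearWord C v n l :=
    shearWord_congr fun i _ => Function.update_of_ne (by lia) _ _
  have hadj : C.adjugate * C = 1 := by rw [Matrix.adjugate_mul, hC, one_smul]
  rw [shearWord, hinit, Function.update_self, add_comm (v _), shear_add, shearWord]
  simp only [Matrix.mul_assoc]
  rw [← Matrix.mul_assoc C.adjugate, hadj, Matrix.one_mul]

theorem trace_mul_shear (P : Matrix (Fin 2) (Fin 2) ℝ) (s : ℝ) :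
    (P * shear s).trace = P.trace + P 0 1 * s := by
  simp [Matrix.trace_fin_two, Matrix.mul_apply, shear]
  ring

theorem exists_trace_shear_conj_mul_shear {P : Matrix (Fin 2) (Fin 2) ℝ} (hC : C.det = 1)
    (hC01 : C 0 1 ≠ 0) (hP : P.det = 1) : ∃ α β γ : ℝ, (α ≠ 0 ∨ γ ≠ 0) ∧ ∀ s t,
      (C * shear t * C.adjugate * (P * shear s)).trace =
        P.trace + (α * s + β * t + γ * (s * t)) := by
  rw [Matrix.det_fin_two] at hC hP
  refine ⟨P 0 1,
    C 0 1 * C 1 1 * P 0 0 - C 0 1 ^ 2 * P 1 0 + C 1 1 ^ 2 * P 0 1 - C 0 1 * C 1 1 * P 1 1,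
    C 0 1 * C 1 1 * P 0 1 - C 0 1 ^ 2 * P 1 1, ?_, fun s t => ?_⟩
  · by_contra! h
    have hP11 : P 1 1 = 0 := by simpa [h.1, hC01] using h.2
    simp [h.1, hP11] at hP
  · simp only [Matrix.trace_fin_two, Matrix.mul_apply, Fin.sum_univ_two, shear,
      Matrix.adjugate_fin_two, Matrix.of_apply, Matrix.cons_val', Matrix.cons_val_zero,
      Matrix.cons_val_one, Matrix.cons_val_fin_one]
    linear_combination (P 0 0 + P 1 1 + s * P 0 1) * hC

theorem exists_small_pos_bilinear {α β γ δ : ℝ} (h : α ≠ 0 ∨ γ ≠ 0) (hδ : 0 < δ) :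
    ∃ s t : ℝ, |s| ≤ δ ∧ |t| ≤ δ ∧ 0 < α * s + β * t + γ * (s * t) := by
  have hsign (x : ℝ) (hx : x ≠ 0) : ∃ s, |s| ≤ δ ∧ 0 < x * s := by
    rcases hx.lt_or_gt with hneg | hpos
    · exact ⟨-δ, by simp [abs_of_pos hδ], mul_pos_of_neg_of_neg hneg (neg_lt_zero.2 hδ)⟩
    · exact ⟨δ, (abs_of_pos hδ).le, mul_pos hpos hδ⟩
  by_cases hα : α = 0
  · by_cases hβ : β = 0
    · obtain ⟨s, hs, hpos⟩ := hsign γ (h.resolve_left (not_not.2 hα))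
      refine ⟨s, δ, hs, (abs_of_pos hδ).le, ?_⟩
      have := mul_pos hpos hδ
      simpa [hα, hβ, mul_assoc] using this
    · obtain ⟨t, ht, hpos⟩ := hsign β hβ
      exact ⟨0, t, by simpa using hδ.le, ht, by simpa using hpos⟩
  · obtain ⟨s, hs, hpos⟩ := hsign α hα
    exact ⟨s, 0, hs, by simpa using hδ.le, by simpa using hpos⟩

theorem exists_small_two_lt_abs_add {α β γ τ δ : ℝ} (hτ : 2 ≤ |τ|) (h : α ≠ 0 ∨ γ ≠ 0)
    (hδ : 0 < δ) :
    ∃ s t : ℝ, |s| ≤ δ ∧ |t| ≤ δ ∧ 2 < |τ + (α * s + β * t + γ * (s * t))| := by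
  rcases le_abs.1 hτ with hpos | hneg
  · obtain ⟨s, t, hs, ht, hlt⟩ := exists_small_pos_bilinear (β := β) h hδ
    exact ⟨s, t, hs, ht, lt_abs.2 (.inl (by linarith))⟩
  · obtain ⟨s, t, hs, ht, hlt⟩ := exists_small_pos_bilinear (α := -α) (β := -β) (γ := -γ)
      (by simpa using h) hδ
    exact ⟨s, t, hs, ht, lt_abs.2 (.inr (by linarith))⟩

theorem exists_hyperbolic_of_two_le_abs_trace (hC : C.det = 1) (hC01 : C 0 1 ≠ 0)
    (h : 2 ≤ |(shearWord C v n (l + 1)).trace|) {ε : ℝ} (hε : 0 < ε) :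
    ∃ w : ℤ → ℝ, (∀ i, |w i - v i| ≤ ε) ∧ 2 < |(shearWord C w n (l + 1)).trace| := by
  obtain ⟨α, β, γ, hne, htrace⟩ :=
    exists_trace_shear_conj_mul_shear hC hC01 (det_shearWord hC v n (l + 1))
  obtain ⟨s, t, hs, ht, hlt⟩ := exists_small_two_lt_abs_add (β := β) h hne (half_pos hε)
  set u := Function.update v n (v n + s)
  have update_sub_le (x : ℤ → ℝ) (m : ℤ) {a : ℝ} (ha : |a| ≤ ε / 2) (i : ℤ) :
      |Function.update x m (x m + a) i - x i| ≤ ε / 2 := by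
    rcases eq_or_ne i m with rfl | hi
    · simpa using ha
    · simpa [hi] using (half_pos hε).le
  refine ⟨Function.update u (n + l) (u (n + l) + t), fun i => ?_, ?_⟩
  · calc _ ≤ _ := abs_sub_le _ (u i) _
      _ ≤ ε / 2 + ε / 2 := add_le_add (update_sub_le u _ ht i) (update_sub_le v n hs i)
      _ = ε := add_halves ε
  · rwa [shearWord_update_last hC, shearWord_update_first, htrace]

theorem trace_pow_of_trace_eq_two_mul_cos {P : Matrix (Fin 2) (Fin 2) ℝ} (hP : P.det = 1) {θ : ℝ}
    (h : P.trace = 2 * Real.cos θ) (n : ℕ) : (P ^ n).trace = 2 * Real.cos (n * θ) := by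
  have cayley_hamilton : P ^ 2 = P.trace • P - 1 := by
    have := P.aeval_self_charpoly
    simp only [Matrix.charpoly_fin_two, hP, map_add, map_sub, map_mul, map_pow, map_one,
      Polynomial.aeval_X, Polynomial.aeval_C, ← Algebra.smul_def] at this
    rw [eq_sub_iff_add_eq, ← sub_eq_zero, ← this]
    abel
  induction n using Nat.twoStepInduction with
  | zero => simp
  | one => simpa using h
  | more n ih0 ih1 =>
    have hpow : P ^ (n + 2) = P.trace • P ^ (n + 1) - P ^ n := by
      rw [pow_add, cayley_hamilton, Matrix.mul_sub, Matrix.mul_smul, ← pow_succ,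
        Matrix.mul_one]
    have hnext : ((n + 2 : ℕ) : ℝ) * θ = (n + 1 : ℕ) * θ + θ := by push_cast; ring
    have hprev : (n : ℝ) * θ = (n + 1 : ℕ) * θ - θ := by push_cast; ring
    rw [hpow, Matrix.trace_sub, Matrix.trace_smul, ih0, ih1, h, smul_eq_mul, hnext, hprev,
      Real.cos_add, Real.cos_sub]
    ring

theorem zero_one_ne_zero_of_abs_trace_lt_two {P : Matrix (Fin 2) (Fin 2) ℝ} (hP : P.det = 1)
    (h : |P.trace| < 2) : P 0 1 ≠ 0 := by
  intro h0
  rw [Matrix.det_fin_two, h0] at hP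
  rw [Matrix.trace_fin_two] at h
  have := sq_lt_sq' (by linarith [abs_lt.1 h]) (abs_lt.1 h).2
  nlinarith [sq_nonneg (P 0 0 - P 1 1)]

theorem exists_rat_two_mul_cos_near {τ δ : ℝ} (hτ : |τ| < 2) (hδ : 0 < δ) :
    ∃ x : ℚ, |2 * Real.cos (x * Real.pi) - τ| < δ := by
  have hcos : 2 * Real.cos (Real.arccos (τ / 2) / Real.pi * Real.pi) = τ := by
    rw [div_mul_cancel₀ _ Real.pi_ne_zero, Real.cos_arccos] <;> linarith [abs_lt.1 hτ]
  have hopen : IsOpen {x : ℝ | |2 * Real.cos (x * Real.pi) - τ| < δ} :=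
    isOpen_lt (by fun_prop) continuous_const
  exact Rat.denseRange_cast.exists_mem_open hopen
    ⟨Real.arccos (τ / 2) / Real.pi, by rw [Set.mem_ofPred_eq, hcos]; simpa using hδ⟩

-- An elliptic word is perturbed until its rotation angle is a rational multiple of `π`; a
-- suitable power of it is then `± 1`.
theorem exists_pow_two_le_abs_trace (hC : C.det = 1) (v : ℤ → ℝ) (n : ℤ) (l : ℕ) {ε : ℝ}
    (hε : 0 < ε) : ∃ N > 0, ∃ w : ℤ → ℝ, (∀ i, |w i - v i| ≤ ε) ∧
      2 ≤ |(shearWord C w n (l + 1) ^ N).trace| := by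
  set P := shearWord C v n (l + 1)
  have hP : P.det = 1 := det_shearWord hC _ _ _
  by_cases hge : 2 ≤ |P.trace|
  · exact ⟨1, one_pos, v, fun i => by simpa using hε.le, by rwa [pow_one]⟩
  rw [not_le] at hge
  have h01 := zero_one_ne_zero_of_abs_trace_lt_two hP hge
  obtain ⟨x, hx⟩ := exists_rat_two_mul_cos_near hge (mul_pos hε (abs_pos.2 h01))
  set s := (2 * Real.cos (x * Real.pi) - P.trace) / P 0 1
  have hs : |s| ≤ ε := by
    rw [abs_div, div_le_iff₀ (abs_pos.2 h01)]
    exact hx.le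
  refine ⟨x.den, x.den_pos, Function.update v n (v n + s), fun i => ?_, ?_⟩
  · rcases eq_or_ne i n with rfl | hi
    · simpa using hs
    · simpa [hi] using hε.le
  have hangle : (x.den : ℝ) * (x * Real.pi) = x.num * Real.pi := by
    rw [← mul_assoc, mul_comm (x.den : ℝ)]
    exact_mod_cast congrArg (· * Real.pi) (congrArg (Rat.cast (K := ℝ)) (Rat.mul_den_eq_num x))
  have htrace : (P * shear s).trace = 2 * Real.cos (x * Real.pi) := by
    rw [trace_mul_shear, mul_div_cancel₀ _ h01, add_sub_cancel]
  rw [shearWord_update_first, trace_pow_of_trace_eq_two_mul_cos (by simp [hP, det_shear]) htrace,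
    hangle, abs_mul, Real.abs_cos_int_mul_pi]
  norm_num

theorem exists_periodic_hyperbolic (hC : C.det = 1) (hC01 : C 0 1 ≠ 0) {p : ℕ} (hp : 0 < p)
    (hv : Function.Periodic v p) {ε : ℝ} (hε : 0 < ε) :
    ∃ N > 0, ∃ w : ℤ → ℝ, Function.Periodic w (p * N : ℕ) ∧ (∀ i, |w i - v i| ≤ ε) ∧
      2 < |(shearWord C w 0 (p * N)).trace| := by
  obtain ⟨N, hN, u, hu, hge⟩ := exists_pow_two_le_abs_trace hC v 0 (p - 1) (half_pos hε)
  rw [Nat.sub_add_cancel hp] at hge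
  have periodize (x : ℤ → ℝ) (q : ℕ) : Function.Periodic (fun i => x (i % q)) q ∧
      shearWord C (fun i => x (i % q)) 0 q = shearWord C x 0 q :=
    ⟨fun i => by simp, shearWord_congr fun i hi => by
      simp [Int.emod_eq_of_lt i.cast_nonneg (Int.ofNat_lt.2 hi)]⟩
  have hpN : p * N - 1 + 1 = p * N := Nat.sub_add_cancel (Nat.mul_pos hp hN)
  rw [← (periodize u p).2, ← shearWord_period_mul (periodize u p).1, ← hpN] at hge
  obtain ⟨w, hw, hlt⟩ := exists_hyperbolic_of_two_le_abs_trace hC hC01 hge (half_pos hε)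
  rw [hpN, ← (periodize w (p * N)).2] at hlt
  refine ⟨N, hN, _, (periodize w (p * N)).1, fun i => ?_, hlt⟩
  have hmod : v (i % (p * N : ℕ) % p) = v i := by
    have := hv.int_mul (i / p) (i % p)
    rw [Int.cast_id, Int.emod_add_ediv_mul] at this
    rw [Int.emod_emod_of_dvd _ (by exact_mod_cast dvd_mul_right p N), this]
  calc |w (i % (p * N : ℕ)) - v i|
      ≤ _ := abs_sub_le _ (u (i % (p * N : ℕ) % p)) _
    _ ≤ ε / 2 + ε / 2 := by
        refine add_le_add (hw _) ?_
        rw [← hmod]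
        exact hu _
    _ = ε := add_halves ε

end HyperbolicWords

section Sieve

variable {k : ℕ} {b : Fin (k - 1) → ℝ} {V : ℤ → ℝ} {n n' : ℤ}

theorem sieveWith_mul (hk : 0 < k) (b : Fin (k - 1) → ℝ) (V : ℤ → ℝ) (n : ℤ) :
    sieveWith V k b (k * n) = V n := by
  rw [sieveWith, dif_pos (dvd_mul_right _ _), Int.mul_ediv_cancel_left _ (by lia)]

theorem sieveWith_eq_of_not_dvd (hk : 0 < k) (b : Fin (k - 1) → ℝ) (V V' : ℤ → ℝ)
    (h : n ≡ n' [ZMOD k]) (hn : ¬ (k : ℤ) ∣ n) : sieveWith V k b n = sieveWith V' k b n' := by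
  have hn' : ¬ (k : ℤ) ∣ n' := h.dvd_iff.not.1 hn
  have hmod : n % k = n' % k := h
  simp only [sieveWith, dif_neg hn, dif_neg hn', dif_pos hk, hmod]

theorem abs_sieveWith_sub_le (hk : 0 < k) (b : Fin (k - 1) → ℝ) (V V' : ℤ → ℝ)
    (h : n ≡ n' [ZMOD k]) :
    |sieveWith V k b n - sieveWith V' k b n'| ≤ |V (n / k) - V' (n' / k)| := by
  by_cases hn : (k : ℤ) ∣ n
  · simp only [sieveWith, dif_pos hn, dif_pos (h.dvd_iff.1 hn), le_refl]
  · rw [sieveWith_eq_of_not_dvd hk b V V' h hn, sub_self, abs_zero]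
    exact abs_nonneg _

theorem abs_sieveWith_add_mul_sub_le (hk : 0 < k) (b : Fin (k - 1) → ℝ) (V : ℤ → ℝ) (n a : ℤ) :
    |sieveWith V k b (n + k * a) - sieveWith V k b n| ≤ |V (n / k + a) - V (n / k)| := by
  have := abs_sieveWith_sub_le hk b V V (Int.modEq_add_fac_self (a := n) (t := a) (n := k))
  rwa [Int.add_mul_ediv_left _ _ (by lia)] at this

theorem sieveWith_periodic (hk : 0 < k) (b : Fin (k - 1) → ℝ) {a : ℤ}
    (hV : Function.Periodic V a) : Function.Periodic (sieveWith V k b) (k * a) := by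
  intro n
  have := abs_sieveWith_add_mul_sub_le hk b V n a
  rwa [hV, sub_self, abs_zero, abs_nonpos_iff, sub_eq_zero] at this

theorem hasLargeAlmostPeriods_of_mem_LPZ {V : ℤ →ᵇ ℝ} (hV : V ∈ LPZ) :
    HasLargeAlmostPeriods V := by
  intro ε hε
  obtain ⟨W, ⟨q, hq, hW⟩, hdist⟩ := Metric.mem_closure_iff.1 hV (ε / 2) (half_pos hε)
  have hinj : Function.Injective fun i : ℤ => i * q := mul_left_injective₀ (by lia)
  refine hinj.tendsto_cofinite.frequently (Frequently.of_forall fun i n => ?_)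
  have hperiodic : W (n + i * q) = W n := (show Function.Periodic W q from hW).int_mul i n
  have near (m : ℤ) : |V m - W m| ≤ ε / 2 := (dist_coe_le_dist m).trans hdist.le
  calc _ ≤ |V (n + i * q) - W (n + i * q)| + |W n - V n| := by
        rw [← hperiodic]
        exact abs_sub_le _ _ _
    _ ≤ ε / 2 + ε / 2 := add_le_add (near _) (abs_sub_comm (W n) (V n) ▸ near n)
    _ = ε := add_halves ε

theorem HasLargeAlmostPeriods.sieveWith (hV : HasLargeAlmostPeriods V) (hk : 0 < k)
    (b : Fin (k - 1) → ℝ) : HasLargeAlmostPeriods (sieveWith V k b) := by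
  intro ε hε
  have hinj : Function.Injective fun a : ℤ => (k : ℤ) * a := mul_right_injective₀ (by lia)
  exact hinj.tendsto_cofinite.frequently <| (hV ε hε).mono fun a ha n =>
    (abs_sieveWith_add_mul_sub_le hk b V n a).trans (ha _)

/-- The potential `V^{[k,b]}` as a bounded sequence. -/
def boundedSieve (k : ℕ) (b : Fin (k - 1) → ℝ) (V : ℤ →ᵇ ℝ) : ℤ →ᵇ ℝ :=
  .ofNormedAddCommGroupDiscrete (sieveWith V k b) (‖V‖ + ∑ i, |b i|) fun n => by
    have hb : 0 ≤ ∑ i, |b i| := Finset.sum_nonneg fun _ _ => abs_nonneg _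
    unfold sieveWith
    split_ifs
    · exact le_add_of_le_of_nonneg (V.norm_coe_le_norm _) hb
    · exact le_add_of_nonneg_of_le (norm_nonneg V)
        (Finset.single_le_sum (f := fun i => |b i|) (fun _ _ => abs_nonneg _) (Finset.mem_univ _))
    · rw [norm_zero]
      positivity

theorem coe_boundedSieve (V : ℤ →ᵇ ℝ) : ⇑(boundedSieve k b V) = sieveWith V k b := rfl

theorem lipschitzWith_boundedSieve (hk : 0 < k) (b : Fin (k - 1) → ℝ) :
    LipschitzWith 1 (boundedSieve k b) := by
  refine .of_dist_le_mul fun V V' => ?_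
  rw [NNReal.coe_one, one_mul]
  exact (dist_le dist_nonneg).2 fun n =>
    (abs_sieveWith_sub_le hk b V V' rfl).trans (dist_coe_le_dist (f := V) (g := V') (n / k))

/-- The transfer matrix at energy `E` across the inserted string `b`. -/
def stringTransfer (k : ℕ) (b : Fin (k - 1) → ℝ) (E : ℝ) : Matrix (Fin 2) (Fin 2) ℝ :=
  shearWord (freeStep E) (sieveWith 0 k b) 1 (k - 1)

/-- The transfer matrix at energy `E` across a block of length `k` is
`blockTransfer k b E * shear v`, where `v` is the only letter of the block not taken from `b`. -/
def blockTransfer (k : ℕ) (b : Fin (k - 1) → ℝ) (E : ℝ) : Matrix (Fin 2) (Fin 2) ℝ :=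
  stringTransfer k b E * freeStep E

theorem det_blockTransfer (k : ℕ) (b : Fin (k - 1) → ℝ) (E : ℝ) :
    (blockTransfer k b E).det = 1 := by
  rw [blockTransfer, Matrix.det_mul, stringTransfer, det_shearWord (det_freeStep E),
    det_freeStep, one_mul]

theorem blockTransfer_zero_one (k : ℕ) (b : Fin (k - 1) → ℝ) (E : ℝ) :
    blockTransfer k b E 0 1 = -stringTransfer k b E 0 0 := by
  simp [blockTransfer, freeStep, Matrix.mul_apply]

theorem shearWord_sieveWith_block (hk : 0 < k) (V : ℤ → ℝ) (E : ℝ) (i : ℤ) :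
    shearWord (freeStep E) (sieveWith V k b) (k * i) k = blockTransfer k b E * shear (V i) := by
  have hstring : shearWord (freeStep E) (sieveWith V k b) (k * i + 1) (k - 1) =
      stringTransfer k b E := by
    rw [stringTransfer, add_comm, ← shearWord_add_period
      (sieveWith_periodic hk b (V := 0) (a := i) fun _ => rfl)]
    refine shearWord_congr fun j hj => sieveWith_eq_of_not_dvd hk b _ _ rfl fun hdvd => ?_
    rw [add_right_comm, dvd_add_left (dvd_mul_right _ i)] at hdvd
    have := Int.le_of_dvd (by lia) hdvd
    lia
  have := shearWord_succ' (freeStep E) (sieveWith V k b) (k * i) (k - 1)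
  rwa [Nat.sub_add_cancel hk, hstring, sieveWith_mul hk, ← Matrix.mul_assoc] at this

theorem shearWord_sieveWith (hk : 0 < k) (V : ℤ → ℝ) (E : ℝ) (l : ℕ) :
    shearWord (freeStep E) (sieveWith V k b) 0 (k * l) = shearWord (blockTransfer k b E) V 0 l := by
  induction l with
  | zero => rfl
  | succ l ih =>
    have := shearWord_sieveWith_block (b := b) hk V E l
    rw [Nat.mul_succ, shearWord_add, ih, shearWord, zero_add, zero_add, Nat.cast_mul, this]

theorem exists_periodic_notMem_spectrum (hk : 0 < k) {E : ℝ} (hE : stringTransfer k b E 0 0 ≠ 0)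
    {V : ℤ →ᵇ ℝ} (hV : IsPeriodicSeq V) {ε : ℝ} (hε : 0 < ε) :
    ∃ W : ℤ →ᵇ ℝ, IsPeriodicSeq W ∧ dist W V ≤ ε ∧
      E ∉ spectrum ℝ (schrodinger (boundedSieve k b W)) := by
  obtain ⟨p, hp, hVp⟩ := hV
  obtain ⟨N, hN, w, hperiodic, hw, htrace⟩ :=
    exists_periodic_hyperbolic (C := blockTransfer k b E) (det_blockTransfer k b E)
      (by rwa [blockTransfer_zero_one, neg_ne_zero]) hp hVp hε
  let W : ℤ →ᵇ ℝ := .ofNormedAddCommGroupDiscrete w (‖V‖ + ε) fun n => by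
    rw [← sub_add_cancel (w n) (V n), add_comm ‖V‖]
    exact norm_add_le_of_le (hw n) (V.norm_coe_le_norm n)
  refine ⟨W, ⟨p * N, Nat.mul_pos hp hN, hperiodic⟩, (dist_le hε.le).2 hw, fun hmem => ?_⟩
  have hsieve : Function.Periodic (boundedSieve k b W) (k * (p * N) : ℕ) := by
    exact_mod_cast sieveWith_periodic hk b hperiodic
  have := abs_trace_le_two_of_mem_spectrum hsieve hmem
  rw [coe_boundedSieve, shearWord_sieveWith hk] at this
  exact this.not_gt htrace

end Sieve

section Decay

variable {φ U U' : ℤ →ᵇ ℝ} {κ E : ℝ}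

theorem norm_shift_mulOp_sub_le (hκ : 0 ≤ κ) (hφ : ∀ n, 0 ≤ φ n) {a : ℤ}
    (h : ∀ n, |φ (n + a) - φ n| ≤ κ * (φ (n + a) + 1)) (f : Ell2) :
    ‖shift a (mulOp φ f) - mulOp φ (shift a f)‖ ≤ κ * (‖mulOp φ f‖ + ‖f‖) := by
  calc _ ≤ ‖κ • shift a (mulOp φ f + f)‖ := lp.norm_mono two_ne_zero fun n => by
        have h1 : (shift a (mulOp φ f) - mulOp φ (shift a f)) n =
          φ (n + a) * f (n + a) - φ n * f (n + a) := rfl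
        have h2 : (κ • shift a (mulOp φ f + f)) n =
          κ * (φ (n + a) * f (n + a) + f (n + a)) := rfl
        rw [h1, h2, ← sub_mul, ← add_one_mul, ← mul_assoc, norm_mul, norm_mul,
          Real.norm_of_nonneg (mul_nonneg hκ (add_nonneg (hφ _) zero_le_one))]
        exact mul_le_mul_of_nonneg_right (h n) (norm_nonneg _)
    _ ≤ _ := by
        rw [norm_smul, norm_shift_apply, Real.norm_of_nonneg hκ]
        exact mul_le_mul_of_nonneg_left (norm_add_le _ _) hκ

theorem norm_schrodinger_mulOp_sub_le (hκ : 0 ≤ κ) (hφ : ∀ n, 0 ≤ φ n)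
    (hleft : ∀ n, |φ (n + 1) - φ n| ≤ κ * (φ n + 1))
    (hright : ∀ n, |φ (n + 1) - φ n| ≤ κ * (φ (n + 1) + 1)) (U : ℤ →ᵇ ℝ) (f : Ell2) :
    ‖schrodinger U (mulOp φ f) - mulOp φ (schrodinger U f)‖ ≤
      2 * κ * (‖mulOp φ f‖ + ‖f‖) := by
  have hcomm : schrodinger U (mulOp φ f) - mulOp φ (schrodinger U f) =
      (shift 1 (mulOp φ f) - mulOp φ (shift 1 f)) +
        (shift (-1) (mulOp φ f) - mulOp φ (shift (-1) f)) := by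
    ext n
    change schrodinger U (mulOp φ f) n - φ n * schrodinger U f n =
      (φ (n + 1) * f (n + 1) - φ n * f (n + 1)) + (φ (n - 1) * f (n - 1) - φ n * f (n - 1))
    simp only [schrodinger_apply, mulOp_apply]
    ring
  have hneg (n : ℤ) : |φ (n + -1) - φ n| ≤ κ * (φ (n + -1) + 1) := by
    simpa [abs_sub_comm] using hleft (n + -1)
  calc _ ≤ κ * (‖mulOp φ f‖ + ‖f‖) + κ * (‖mulOp φ f‖ + ‖f‖) := hcomm ▸
        norm_add_le_of_le (norm_shift_mulOp_sub_le hκ hφ hright f)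
          (norm_shift_mulOp_sub_le hκ hφ hneg f)
    _ = _ := by ring

/-- An estimate of Combes–Thomas type. -/
theorem mul_norm_mulOp_le_of_disjoint {η : ℝ} (hκ : 0 ≤ κ) (hφ : ∀ n, 0 ≤ φ n)
    (hleft : ∀ n, |φ (n + 1) - φ n| ≤ κ * (φ n + 1))
    (hright : ∀ n, |φ (n + 1) - φ n| ≤ κ * (φ (n + 1) + 1)) (hU : ∀ n, φ n ≠ 0 → U n = U' n)
    (hgap : Disjoint (spectrum ℝ (schrodinger U')) (Metric.ball E η)) (f : Ell2) :
    η * ‖mulOp φ f‖ ≤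
      ‖φ‖ * ‖schrodinger U f - E • f‖ + 2 * κ * (‖mulOp φ f‖ + ‖f‖) := by
  have hlocal : schrodinger U' (mulOp φ f) = schrodinger U (mulOp φ f) := by
    ext n
    rcases eq_or_ne (φ n) 0 with h | h
    · simp [schrodinger_apply, h]
    · rw [schrodinger_apply, schrodinger_apply, hU n h]
  have hsplit : schrodinger U' (mulOp φ f) - E • mulOp φ f =
      mulOp φ (schrodinger U f - E • f) +
        (schrodinger U (mulOp φ f) - mulOp φ (schrodinger U f)) := by
    rw [hlocal, map_sub, map_smul]
    abel
  calc _ ≤ ‖schrodinger U' (mulOp φ f) - E • mulOp φ f‖ :=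
        mul_norm_le_of_disjoint_spectrum_ball (isSelfAdjoint_schrodinger U') hgap _
    _ ≤ _ := hsplit ▸ norm_add_le_of_le ((mulOp φ).le_of_opNorm_le (norm_mulOp_le φ) _)
        (norm_schrodinger_mulOp_sub_le hκ hφ hleft hright U f)

theorem norm_jacobi_sub_schrodinger_le {w : ℤ →ᵇ ℝ} {B : ℝ} (hB : 0 < B)
    (hw : ∀ n, B * |w n - 1| ≤ φ n) (hw' : ∀ n, B * |w n - 1| ≤ φ (n + 1)) (U : ℤ →ᵇ ℝ)
    (f : Ell2) : ‖jacobi w U f - schrodinger U f‖ ≤ 2 / B * ‖mulOp φ f‖ := by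
  have hsplit : jacobi w U f - schrodinger U f =
      mulOp (w - 1) (shift 1 f) + shift (-1) (mulOp (w - 1) f) := by
    ext n
    change jacobi w U f n - schrodinger U f n =
      (w n - 1) * f (n + 1) + (w (n - 1) - 1) * f (n - 1)
    rw [schrodinger_apply, jacobi_apply]
    ring
  have hmul {x y : ℝ} (z : ℝ) (h : B * |x| ≤ y) : ‖x * z‖ ≤ ‖B⁻¹ * (y * z)‖ := by
    rw [← mul_assoc, norm_mul, norm_mul]
    refine mul_le_mul_of_nonneg_right ?_ (norm_nonneg z)
    rw [Real.norm_eq_abs, ← div_eq_inv_mul, Real.norm_eq_abs]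
    exact ((le_div_iff₀' hB).2 h).trans (le_abs_self _)
  have h1 : ‖mulOp (w - 1) (shift 1 f)‖ ≤ ‖B⁻¹ • shift 1 (mulOp φ f)‖ :=
    lp.norm_mono two_ne_zero fun n => hmul (f (n + 1)) (hw' n)
  have h2 : ‖mulOp (w - 1) f‖ ≤ ‖B⁻¹ • mulOp φ f‖ :=
    lp.norm_mono two_ne_zero fun n => hmul (f n) (hw n)
  rw [norm_smul, norm_shift_apply, norm_inv, Real.norm_of_nonneg hB.le] at h1
  rw [norm_smul, norm_inv, Real.norm_of_nonneg hB.le] at h2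
  calc _ ≤ B⁻¹ * ‖mulOp φ f‖ + B⁻¹ * ‖mulOp φ f‖ :=
        hsplit ▸ norm_add_le_of_le h1 ((norm_shift_apply _ _).trans_le h2)
    _ = _ := by ring

theorem exists_mem_spectrum_jacobi_abs_sub_lt {w : ℤ →ᵇ ℝ} {B η r : ℝ} (hη : 0 < η) (hB : 0 < B)
    (hr : 2 / B < r) (hφ : ∀ n, 0 ≤ φ n)
    (hleft : ∀ n, |φ (n + 1) - φ n| ≤ η / 8 * (φ n + 1))
    (hright : ∀ n, |φ (n + 1) - φ n| ≤ η / 8 * (φ (n + 1) + 1))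
    (hU : ∀ n, φ n ≠ 0 → U n = U' n)
    (hw : ∀ n, B * |w n - 1| ≤ φ n) (hw' : ∀ n, B * |w n - 1| ≤ φ (n + 1))
    (hgap : Disjoint (spectrum ℝ (schrodinger U')) (Metric.ball E η))
    (hE : E ∈ spectrum ℝ (schrodinger U)) :
    ∃ s ∈ spectrum ℝ (jacobi w U), |s - E| < r := by
  have hφ1 : 0 < ‖φ‖ + 1 := by positivity
  obtain ⟨f, hf, hres⟩ := exists_norm_sub_smul_lt_of_mem_spectrum (isSelfAdjoint_schrodinger U) hE
    (lt_min (div_pos (half_pos hη) hφ1) (sub_pos.2 hr))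
  refine exists_mem_spectrum_abs_sub_lt (isSelfAdjoint_jacobi w U) hf ?_
  have hdecay : ‖mulOp φ f‖ ≤ 1 := by
    have h1 := mul_norm_mulOp_le_of_disjoint (by positivity) hφ hleft hright hU hgap f
    have h2 : ‖φ‖ * ‖schrodinger U f - E • f‖ ≤ η / 2 := by
      calc _ ≤ (‖φ‖ + 1) * (η / 2 / (‖φ‖ + 1)) := by
            gcongr
            exacts [le_add_of_nonneg_right zero_le_one, hres.le.trans (min_le_left _ _)]
        _ = η / 2 := mul_div_cancel₀ _ hφ1.ne'
    rw [hf] at h1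
    nlinarith
  calc ‖jacobi w U f - E • f‖
      = ‖(jacobi w U f - schrodinger U f) + (schrodinger U f - E • f)‖ := by
        rw [sub_add_sub_cancel]
    _ < 2 / B * 1 + (r - 2 / B) := (norm_add_le _ _).trans_lt <| add_lt_add_of_le_of_lt
        ((norm_jacobi_sub_schrodinger_le hB hw hw' U f).trans
          (mul_le_mul_of_nonneg_left hdecay (by positivity)))
        (hres.trans_le (min_le_right _ _))
    _ = r := by ring

/-- The distance from `n` to the nearest end of its period `[c + i * q, c + (i + 1) * q)`. -/
def cutDistance (q : ℕ) (c n : ℤ) : ℕ :=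
  min ((n - c) % q).toNat (q - 1 - ((n - c) % q).toNat)

variable {q : ℕ} {c n : ℤ}

theorem exists_mem_Ico_of_cutDistance_lt (hq : 0 < q) {h : ℕ} (hn : cutDistance q c n < h) :
    ∃ i : ℤ, n ∈ Ico (c + i * q - h) (c + i * q + h) := by
  have h1 := Int.emod_add_ediv_mul (n - c) q
  have h2 := Int.emod_nonneg (n - c) (by lia : (q : ℤ) ≠ 0)
  have h3 := Int.emod_lt_of_pos (n - c) (by lia : (0 : ℤ) < q)
  rcases min_lt_iff.1 hn with h4 | h4
  · exact ⟨(n - c) / q, by constructor <;> lia⟩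
  · refine ⟨(n - c) / q + 1, ?_⟩
    rw [add_one_mul]
    constructor <;> lia

theorem emod_add_one_cases (hq : 0 < q) (n : ℤ) :
    (n + 1) % q = n % q + 1 ∨ n % q = q - 1 ∧ (n + 1) % q = 0 := by
  have h2 := Int.emod_nonneg n (by lia : (q : ℤ) ≠ 0)
  have h3 := Int.emod_lt_of_pos n (by lia : (0 : ℤ) < q)
  rw [← Int.emod_add_emod]
  rcases (Int.add_one_le_iff.2 h3).lt_or_eq with h | h
  · exact .inl (Int.emod_eq_of_lt (by lia) h)
  · exact .inr ⟨eq_sub_of_add_eq h, by rw [h, Int.emod_self]⟩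

theorem cutDistance_add_one_le (hq : 0 < q) (c n : ℤ) :
    cutDistance q c (n + 1) ≤ cutDistance q c n + 1 := by
  have := Int.emod_nonneg (n - c) (by lia : (q : ℤ) ≠ 0)
  have := emod_add_one_cases hq (n - c)
  rw [cutDistance, cutDistance, add_sub_right_comm]
  lia

theorem cutDistance_le_add_one (hq : 0 < q) (c n : ℤ) :
    cutDistance q c n ≤ cutDistance q c (n + 1) + 1 := by
  have := Int.emod_nonneg (n - c) (by lia : (q : ℤ) ≠ 0)
  have := emod_add_one_cases hq (n - c)
  rw [cutDistance, cutDistance, add_sub_right_comm]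
  lia

theorem cutDistance_eq_zero_of_dvd (h : (q : ℤ) ∣ n - c) : cutDistance q c n = 0 := by
  rw [cutDistance, Int.emod_eq_zero_of_dvd h, Int.toNat_zero, zero_min]

theorem cutDistance_eq_zero_of_dvd_add_one (hq : 0 < q) (h : (q : ℤ) ∣ n + 1 - c) :
    cutDistance q c n = 0 := by
  have := Int.emod_nonneg (n - c) (by lia : (q : ℤ) ≠ 0)
  have hcases := emod_add_one_cases hq (n - c)
  rw [← add_sub_right_comm, Int.emod_eq_zero_of_dvd h] at hcases
  rw [cutDistance]
  lia

/-- The weight `(1 + κ) ^ ρ - 1`, where `ρ` decreases from `h` to `0` away from the bonds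
`(c - 1 + i * q, c + i * q)`. -/
def cutProfile (κ : ℝ) (h q : ℕ) (c : ℤ) : ℤ →ᵇ ℝ :=
  .ofNormedAddCommGroupDiscrete (fun n => (1 + κ) ^ (h - cutDistance q c n) - 1)
    ((1 + |1 + κ|) ^ h + 1) fun n => by
    refine norm_sub_le_of_le ?_ norm_one.le
    calc ‖(1 + κ) ^ (h - cutDistance q c n)‖ ≤ (1 + |1 + κ|) ^ (h - cutDistance q c n) := by
          rw [norm_pow]
          exact pow_le_pow_left₀ (norm_nonneg _) (le_add_of_nonneg_left zero_le_one) _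
      _ ≤ _ := pow_le_pow_right₀ (le_add_of_nonneg_right (abs_nonneg _)) (Nat.sub_le _ _)

theorem cutProfile_apply (κ : ℝ) (h q : ℕ) (c n : ℤ) :
    cutProfile κ h q c n = (1 + κ) ^ (h - cutDistance q c n) - 1 := rfl

theorem abs_pow_sub_pow_le_of_le_add_one (hκ : 0 ≤ κ) {i j : ℕ} (hij : i ≤ j + 1)
    (hji : j ≤ i + 1) : |(1 + κ) ^ i - (1 + κ) ^ j| ≤ κ * (1 + κ) ^ i := by
  have hpos (m : ℕ) : 0 ≤ κ * (1 + κ) ^ m := by positivity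
  rcases (by lia : i = j + 1 ∨ i = j ∨ j = i + 1) with rfl | rfl | rfl
  · rw [pow_succ, mul_one_add, add_sub_cancel_left, mul_comm _ κ, abs_of_nonneg (hpos j)]
    nlinarith [hpos j]
  · rw [sub_self, abs_zero]
    exact hpos i
  · rw [pow_succ, mul_one_add, sub_add_cancel_left, mul_comm _ κ, abs_neg, abs_of_nonneg (hpos i)]

theorem abs_cutProfile_sub_le (hκ : 0 ≤ κ) {h : ℕ} {m : ℤ}
    (hmn : cutDistance q c m ≤ cutDistance q c n + 1)
    (hnm : cutDistance q c n ≤ cutDistance q c m + 1) :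
    |cutProfile κ h q c m - cutProfile κ h q c n| ≤ κ * (cutProfile κ h q c m + 1) := by
  simp only [cutProfile_apply, sub_sub_sub_cancel_right, sub_add_cancel]
  exact abs_pow_sub_pow_le_of_le_add_one hκ (by lia) (by lia)

theorem mul_abs_cutWeight_sub_one_le (hκ : 0 ≤ κ) (h : ℕ) {m : ℤ}
    (hm : (q : ℤ) ∣ n + 1 - c → cutDistance q c m = 0) :
    ((1 + κ) ^ h - 1) * |cutWeight q c n - 1| ≤ cutProfile κ h q c m := by
  rw [cutWeight_apply, cutProfile_apply]
  split_ifs with hdvd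
  · rw [hm hdvd, zero_sub, abs_neg, abs_one, mul_one, Nat.sub_zero]
  · rw [sub_self, abs_zero, mul_zero, sub_nonneg]
    exact one_le_pow₀ (le_add_of_nonneg_right hκ)

theorem exists_mem_spectrum_cut_abs_sub_lt {η : ℝ} {h : ℕ} (hη : 0 < η)
    (hh : 2 ≤ (1 + η / 8) ^ h) (hq : 0 < q)
    (hU : ∀ i : ℤ, ∀ n ∈ Ico (c + i * q - h) (c + i * q + h), U n = U' n)
    (hgap : Disjoint (spectrum ℝ (schrodinger U')) (Metric.ball E η))
    (hE : E ∈ spectrum ℝ (schrodinger U)) :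
    ∃ s ∈ spectrum ℝ (jacobi (cutWeight q c) U), |s - E| < 5 / (1 + η / 8) ^ h := by
  have hκ : 0 ≤ η / 8 := by positivity
  refine exists_mem_spectrum_jacobi_abs_sub_lt (φ := cutProfile (η / 8) h q c)
    (B := (1 + η / 8) ^ h - 1) hη (by linarith) ?_ (fun n => ?_) (fun n => ?_) (fun n => ?_)
    (fun n hn => ?_)
    (fun n => mul_abs_cutWeight_sub_one_le hκ h (cutDistance_eq_zero_of_dvd_add_one hq))
    (fun n => mul_abs_cutWeight_sub_one_le hκ h cutDistance_eq_zero_of_dvd) hgap hE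
  · rw [div_lt_div_iff₀ (by linarith) (by linarith)]
    linarith
  · exact sub_nonneg.2 (one_le_pow₀ (by linarith))
  · rw [abs_sub_comm]
    exact abs_cutProfile_sub_le hκ (cutDistance_le_add_one hq c n) (cutDistance_add_one_le hq c n)
  · exact abs_cutProfile_sub_le hκ (cutDistance_add_one_le hq c n) (cutDistance_le_add_one hq c n)
  · have hlt : cutDistance q c n < h := by
      by_contra! hle
      rw [cutProfile_apply, Nat.sub_eq_zero_of_le hle, pow_zero, sub_self] at hn
      exact hn rfl
    obtain ⟨i, hi⟩ := exists_mem_Ico_of_cutDistance_lt hq hlt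
    exact hU i n hi

end Decay

section Covers

/-- `s` has a finite cover by balls whose radii `r i` satisfy `∑ i, (2 * r i) ^ d < ε`. -/
def HasBallCover {X : Type*} [PseudoMetricSpace X] (d ε : ℝ) (s : Set X) : Prop :=
  ∃ (ι : Type) (_ : Fintype ι) (c : ι → X) (r : ι → ℝ), (∀ i, 0 < r i) ∧
    s ⊆ ⋃ i, Metric.ball (c i) (r i) ∧ ∑ i, (2 * r i) ^ d < ε

variable {X : Type*} [PseudoMetricSpace X] {d ε ε' : ℝ} {s t : Set X}

theorem HasBallCover.mono (ht : HasBallCover d ε t) (h : s ⊆ t) : HasBallCover d ε s :=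
  let ⟨ι, hι, c, r, hr, hcover, hsum⟩ := ht
  ⟨ι, hι, c, r, hr, h.trans hcover, hsum⟩

theorem HasBallCover.union (hs : HasBallCover d ε s) (ht : HasBallCover d ε' t) :
    HasBallCover d (ε + ε') (s ∪ t) := by
  obtain ⟨ι, _, c, r, hr, hcover, hsum⟩ := hs
  obtain ⟨ι', _, c', r', hr', hcover', hsum'⟩ := ht
  refine ⟨ι ⊕ ι', inferInstance, Sum.elim c c', Sum.elim r r', Sum.rec hr hr', ?_, ?_⟩
  · rw [iUnion_sum]
    exact union_subset_union hcover hcover'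
  · rw [Fintype.sum_sum_type]
    exact add_lt_add hsum hsum'

theorem hasBallCover_biUnion_ball {S : Finset X} {r : ℝ} (hr : 0 < r)
    (h : S.card * (2 * r) ^ d < ε) : HasBallCover d ε (⋃ c ∈ S, Metric.ball c r) := by
  refine ⟨Fin S.card, inferInstance, fun i => S.equivFin.symm i, fun _ => r, fun _ => hr, ?_,
    by simpa using h⟩
  rw [S.equivFin.symm.surjective.iUnion_comp fun c : S => Metric.ball (c : X) r, iUnion_subtype]

theorem isOpen_setOf_hasBallCover_spectrum {𝕜 A : Type*} [NormedField 𝕜] [ProperSpace 𝕜]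
    [NormedRing A] [NormedAlgebra 𝕜 A] [CompleteSpace A] (d ε : ℝ) :
    IsOpen {a : A | HasBallCover d ε (spectrum 𝕜 a)} := by
  rw [isOpen_iff_mem_nhds]
  rintro a ⟨ι, hι, c, r, hr, hcover, hsum⟩
  have hopen : IsOpen (⋃ i, Metric.ball (c i) (r i)) := isOpen_iUnion fun _ => Metric.isOpen_ball
  filter_upwards [upperHemicontinuous_spectrum 𝕜 A a _ (hopen.mem_nhdsSet.2 hcover)] with a' ha'
  exact ⟨ι, hι, c, r, hr, subset_of_mem_nhdsSet ha', hsum⟩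

theorem tendsto_mul_const_div_pow_rpow (C : ℝ) {x y : ℝ} (hx : 1 < x) (hy : 0 ≤ y) (hd : 0 < d) :
    Tendsto (fun n : ℕ => C * n * (y / x ^ n) ^ d) atTop (𝓝 0) := by
  have hx0 : 0 ≤ x⁻¹ := by positivity
  have hlt : x⁻¹ ^ d < 1 := Real.rpow_lt_one hx0 (inv_lt_one_of_one_lt₀ hx) hd
  have := (tendsto_self_mul_const_pow_of_lt_one (by positivity) hlt).const_mul (C * y ^ d)
  rw [mul_zero] at this
  refine this.congr fun n => ?_
  rw [div_eq_mul_inv, ← inv_pow, Real.mul_rpow hy (pow_nonneg hx0 n), Real.rpow_pow_comm hx0]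
  ring

theorem exists_pos_mul_rpow_lt (C : ℝ) (hd : 0 < d) (hε : 0 < ε) :
    ∃ r > 0, C * (2 * r) ^ d < ε := by
  have hcont : Continuous fun r : ℝ => C * (2 * r) ^ d :=
    continuous_const.mul ((continuous_const.mul continuous_id).rpow_const fun _ => .inr hd.le)
  have hlt : ∀ᶠ r in 𝓝 (0 : ℝ), C * (2 * r) ^ d < ε :=
    hcont.continuousAt.eventually_lt_const (by simpa [Real.zero_rpow hd.ne'] using hε)
  obtain ⟨r, hr, hpos⟩ := ((hlt.filter_mono nhdsWithin_le_nhds).and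
    (self_mem_nhdsWithin (s := Ioi 0))).exists
  exact ⟨r, hpos, hr⟩

theorem ediam_ball_le_ofReal (x : X) (r : ℝ) :
    Metric.ediam (Metric.ball x r) ≤ ENNReal.ofReal (2 * r) := by
  rw [← Metric.eball_ofReal, ENNReal.ofReal_mul zero_le_two, ENNReal.ofReal_ofNat]
  exact Metric.ediam_eball_le

theorem dimH_le_of_hasBallCover {X : Type*} [MetricSpace X] {s : Set X} {d : NNReal} (hd : 0 < d)
    (h : ∀ l : ℕ, HasBallCover d (1 / ((l : ℝ) + 1)) s) : dimH s ≤ d := by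
  borelize X
  choose ι hι c r hr hcover hsum using h
  have hlim : Tendsto (fun l : ℕ => 1 / ((l : ℝ) + 1)) atTop (𝓝 0) :=
    tendsto_one_div_add_atTop_nhds_zero_nat
  have hd' : (0 : ℝ) < d := hd
  have hnonneg (l : ℕ) (i : ι l) : 0 ≤ 2 * r l i := by linarith [hr l i]
  have hradius (l : ℕ) (i : ι l) : 2 * r l i ≤ (1 / ((l : ℝ) + 1)) ^ (d : ℝ)⁻¹ := by
    rw [Real.le_rpow_inv_iff_of_pos (hnonneg l i) (by positivity) hd']
    exact (Finset.single_le_sum (f := fun i => (2 * r l i) ^ (d : ℝ))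
      (fun j _ => Real.rpow_nonneg (hnonneg l j) _) (Finset.mem_univ i)).trans (hsum l).le
  have hlim' : Tendsto (fun l : ℕ => ENNReal.ofReal ((1 / ((l : ℝ) + 1)) ^ (d : ℝ)⁻¹)) atTop
      (𝓝 0) := by
    have := hlim.rpow_const (p := (d : ℝ)⁻¹) (.inr (by positivity))
    simpa [hd.ne'] using ENNReal.tendsto_ofReal this
  have hmeasure := Measure.hausdorffMeasure_le_liminf_sum d s _ hlim'
    (fun l i => Metric.ball (c l i) (r l i))
    (.of_forall fun l i =>
      (ediam_ball_le_ofReal _ _).trans (ENNReal.ofReal_le_ofReal (hradius l i)))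
    (.of_forall hcover)
  refine dimH_le_of_hausdorffMeasure_ne_top (ne_top_of_le_ne_top ENNReal.one_ne_top ?_)
  refine hmeasure.trans (liminf_le_of_frequently_le' (.of_forall fun l => ?_))
  calc ∑ i, Metric.ediam (Metric.ball (c l i) (r l i)) ^ (d : ℝ)
      ≤ ∑ i, ENNReal.ofReal ((2 * r l i) ^ (d : ℝ)) := Finset.sum_le_sum fun i _ => by
        rw [← ENNReal.ofReal_rpow_of_nonneg (hnonneg l i) hd'.le]
        exact ENNReal.rpow_le_rpow (ediam_ball_le_ofReal _ _) hd'.le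
    _ = ENNReal.ofReal (∑ i, (2 * r l i) ^ (d : ℝ)) :=
        (ENNReal.ofReal_sum_of_nonneg fun i _ => Real.rpow_nonneg (hnonneg l i) _).symm
    _ ≤ 1 := ENNReal.ofReal_le_one.2 ((hsum l).le.trans (by
        rw [div_le_one (by positivity)]
        exact le_add_of_nonneg_left l.cast_nonneg))

theorem dimH_eq_zero_of_hasBallCover {X : Type*} [MetricSpace X] {s : Set X}
    (h : ∀ m l : ℕ, HasBallCover (1 / ((m : ℝ) + 1)) (1 / ((l : ℝ) + 1)) s) : dimH s = 0 := by
  have hlim : Tendsto (fun m : ℕ => ((1 / ((m : NNReal) + 1) : NNReal) : ENNReal)) atTop (𝓝 0) :=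
    ENNReal.tendsto_coe.2 tendsto_one_div_add_atTop_nhds_zero_nat
  exact nonpos_iff_eq_zero.1 <| ge_of_tendsto' hlim fun m =>
    dimH_le_of_hasBallCover (by positivity) (by simpa using h m)

end Covers

section Concatenation

variable {J l : ℕ} [NeZero J] {v : ZMod J → ℤ →ᵇ ℝ}

/-- The sequence that follows `v j` on the intervals `[i * L, (i + 1) * L)` with `i ≡ j` modulo
`J`. -/
def concat (L : ℕ) (v : ZMod J → ℤ →ᵇ ℝ) : ℤ →ᵇ ℝ :=
  .ofNormedAddCommGroupDiscrete (fun n => v (n / L : ℤ) n) (∑ j, ‖v j‖) fun n =>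
    ((v _).norm_coe_le_norm n).trans
      (Finset.single_le_sum (f := fun j => ‖v j‖) (fun _ _ => norm_nonneg _) (Finset.mem_univ _))

theorem concat_apply (L : ℕ) (v : ZMod J → ℤ →ᵇ ℝ) (n : ℤ) :
    concat L v n = v (n / L : ℤ) n := rfl

theorem concat_periodic {L : ℕ} (hL : 0 < L) (hv : ∀ j, Function.Periodic (v j) L) :
    Function.Periodic (concat L v) (J * L : ℕ) := by
  intro n
  have hmod : (((n + (J * L : ℕ)) / L : ℤ) : ZMod J) = (n / L : ℤ) := by
    rw [Nat.cast_mul, Int.add_mul_ediv_right _ _ (by lia)]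
    simp
  rw [concat_apply, concat_apply, hmod, Nat.cast_mul]
  exact (hv _).nat_mul J n

theorem dist_concat_le {V : ℤ →ᵇ ℝ} {ε : ℝ} (h : ∀ j, dist (v j) V ≤ ε) (L : ℕ) :
    dist (concat L v) V ≤ ε :=
  (dist_le (dist_nonneg.trans (h 0))).2 fun n =>
    (dist_coe_le_dist (f := v (n / L : ℤ)) n).trans (h _)

theorem exists_finset_near_spectrum_concat {k : ℕ} (hk : 0 < k) (b : Fin (k - 1) → ℝ) (hl : 0 < l)
    (hv : ∀ j, Function.Periodic (v j) (2 * l : ℕ)) {η : ℝ} (hη : 0 < η)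
    (hlarge : 2 ≤ (1 + η / 8) ^ (k * l)) :
    ∃ S : Finset ℝ, S.card ≤ J * (J * (2 * (k * l))) ∧
      ∀ E ∈ spectrum ℝ (schrodinger (boundedSieve k b (concat (2 * l) v))), ∀ j,
        Disjoint (spectrum ℝ (schrodinger (boundedSieve k b (v j)))) (Metric.ball E η) →
          E ∈ ⋃ s ∈ S, Metric.ball s (5 / (1 + η / 8) ^ (k * l)) := by
  set q := J * (2 * (k * l)) with hq
  have hJ := NeZero.pos J
  have hq0 : 0 < q := by positivity
  have hperiodic : Function.Periodic (boundedSieve k b (concat (2 * l) v)) q := by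
    have := sieveWith_periodic hk b (concat_periodic (by lia) hv)
    rwa [show (k : ℤ) * (J * (2 * l) : ℕ) = q by push_cast [hq]; ring] at this
  choose S hcard hS using fun j : ZMod J =>
    exists_finset_spectrum_cut_subset hperiodic hq0 (2 * (k * l) * j.val + k * l)
  refine ⟨Finset.univ.biUnion S, ?_, fun E hE j hgap => ?_⟩
  · simpa [ZMod.card] using Finset.card_biUnion_le_card_mul Finset.univ S q fun j _ => hcard j
  have hagree (i : ℤ) : ∀ n ∈ Ico (2 * (k * l) * j.val + k * l + i * q - (k * l : ℕ) : ℤ)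
      (2 * (k * l) * j.val + k * l + i * q + (k * l : ℕ)),
      boundedSieve k b (concat (2 * l) v) n = boundedSieve k b (v j) n := by
    rintro n ⟨hleft, hright⟩
    have hdiv : n / k / (2 * l : ℕ) = j.val + i * J := by
      rw [Int.ediv_ediv_of_nonneg (by positivity), Int.ediv_eq_iff_of_pos (by positivity)]
      push_cast [hq] at *
      constructor <;> linarith
    have hletter : concat (2 * l) v (n / k) = v j (n / k) := by
      rw [concat_apply, hdiv]
      simp
    have := abs_sieveWith_sub_le hk b (concat (2 * l) v) (v j) (n := n) rfl
    rwa [hletter, sub_self, abs_zero, abs_nonpos_iff, sub_eq_zero] at this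
  obtain ⟨s, hs, hlt⟩ := exists_mem_spectrum_cut_abs_sub_lt hη hlarge hq0 hagree hgap hE
  exact mem_iUnion₂.2 ⟨s, Finset.mem_biUnion.2 ⟨j, Finset.mem_univ j, hS j hs⟩, by
    rwa [Metric.mem_ball, dist_comm, Real.dist_eq]⟩

end Concatenation

section Density

variable {k : ℕ} {V : ℤ →ᵇ ℝ} {ε : ℝ}

theorem exists_common_period {ι : Type*} [Finite ι] {v : ι → ℤ →ᵇ ℝ}
    (hv : ∀ i, IsPeriodicSeq (v i)) : ∃ P : ℕ, 0 < P ∧ ∀ i, Function.Periodic (v i) P := by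
  have := Fintype.ofFinite ι
  choose p hp hperiodic using hv
  refine ⟨∏ i, p i, Finset.prod_pos fun i _ => hp i, fun i => ?_⟩
  obtain ⟨m, hm⟩ := Finset.dvd_prod_of_mem p (Finset.mem_univ i)
  rw [hm, Nat.cast_mul, mul_comm]
  exact Function.Periodic.nat_mul (hperiodic i) m

theorem exists_periodic_family_with_gaps (hk : 0 < k) (b : Fin (k - 1) → ℝ)
    (hV : IsPeriodicSeq V) (hε : 0 < ε) {K : Set ℝ} (hK : IsCompact K)
    (hKb : ∀ E ∈ K, stringTransfer k b E 0 0 ≠ 0) :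
    ∃ (J : ℕ) (_ : NeZero J) (v : ZMod J → ℤ →ᵇ ℝ), (∀ j, IsPeriodicSeq (v j)) ∧
      (∀ j, dist (v j) V ≤ ε) ∧ ∃ η > 0, ∀ E ∈ K, ∃ j,
        Disjoint (spectrum ℝ (schrodinger (boundedSieve k b (v j)))) (Metric.ball E η) := by
  let gaps (W : ℤ →ᵇ ℝ) : Set ℝ := (spectrum ℝ (schrodinger (boundedSieve k b W)))ᶜ
  have hopen (W : ℤ →ᵇ ℝ) : IsOpen (gaps W) := (spectrum.isClosed _).isOpen_compl
  obtain ⟨t, ht⟩ := hK.elim_finite_subcover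
    (fun W : {W : ℤ →ᵇ ℝ // IsPeriodicSeq W ∧ dist W V ≤ ε} => gaps W) (fun W => hopen W)
    fun E hE =>
      let ⟨W, hW, hdist, hgap⟩ := exists_periodic_notMem_spectrum hk (hKb E hE) hV hε
      mem_iUnion.2 ⟨⟨W, hW, hdist⟩, hgap⟩
  -- `none` stands for `V` itself and keeps the family nonempty
  let e : ZMod (t.card + 1) ≃ Option t := (Fintype.equivFinOfCardEq (by simp)).symm
  let u (i : Option t) : {W : ℤ →ᵇ ℝ // IsPeriodicSeq W ∧ dist W V ≤ ε} :=
    i.elim ⟨V, hV, by simpa using hε.le⟩ (↑)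
  have hcover : K ⊆ ⋃ j, gaps (u (e j)) := fun E hE => by
    obtain ⟨W, hW, hgap⟩ := mem_iUnion₂.1 (ht hE)
    exact mem_iUnion.2 ⟨e.symm (some ⟨W, hW⟩), by simpa [u] using hgap⟩
  obtain ⟨η, hη, hball⟩ := lebesgue_number_lemma_of_metric hK (fun j => hopen (u (e j))) hcover
  exact ⟨t.card + 1, inferInstance, fun j => u (e j), fun j => (u (e j)).2.1,
    fun j => (u (e j)).2.2, η, hη, fun E hE =>
      (hball E hE).imp fun j hj => (disjoint_left.2 fun _ h => hj h).symm⟩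

theorem finite_setOf_stringTransfer_eq_zero (k : ℕ) (b : Fin (k - 1) → ℝ) :
    {E | stringTransfer k b E 0 0 = 0}.Finite :=
  finite_setOf_transfer_zero_zero_eq_zero (sieveWith 0 k b) 1 (k - 1)

theorem exists_length_mul_rpow_lt (C : ℝ) {x y d δ : ℝ} (hx : 1 < x) (hy : 0 ≤ y) (hd : 0 < d)
    (hδ : 0 < δ) {m : ℕ} (hm : 0 < m) :
    ∃ N > 0, 2 ≤ x ^ (m * N) ∧ C * (m * N : ℕ) * (y / x ^ (m * N)) ^ d < δ := by
  have hlim : Tendsto (fun N : ℕ => m * N) atTop atTop := tendsto_id.const_mul_atTop' hm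
  obtain ⟨N, hlarge, hsmall, hN⟩ :=
    ((hlim.eventually ((tendsto_pow_atTop_atTop_of_one_lt hx).eventually_ge_atTop 2)).and
      ((hlim.eventually ((tendsto_mul_const_div_pow_rpow C hx hy hd).eventually_lt_const hδ)).and
        (eventually_gt_atTop 0))).exists
  exact ⟨N, hN, hlarge, hsmall⟩

theorem exists_periodic_hasBallCover_inter (hk : 0 < k) (b : Fin (k - 1) → ℝ)
    (hV : IsPeriodicSeq V) (hε : 0 < ε) {d δ : ℝ} (hd : 0 < d) (hδ : 0 < δ) {K : Set ℝ}
    (hK : IsCompact K) (hKb : ∀ E ∈ K, stringTransfer k b E 0 0 ≠ 0) :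
    ∃ W : ℤ →ᵇ ℝ, IsPeriodicSeq W ∧ dist W V ≤ ε ∧
      HasBallCover d δ (spectrum ℝ (schrodinger (boundedSieve k b W)) ∩ K) := by
  obtain ⟨J, _, v, hv, hdist, η, hη, hgap⟩ := exists_periodic_family_with_gaps hk b hV hε hK hKb
  obtain ⟨P, hP, hperiodic⟩ := exists_common_period hv
  obtain ⟨N, hN, hlarge, hsmall⟩ := exists_length_mul_rpow_lt (2 * J * J)
    (by linarith : 1 < 1 + η / 8) (by norm_num : (0 : ℝ) ≤ 10) hd hδ (Nat.mul_pos hk hP)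
  set l := P * N with hl
  have hl0 : 0 < l := Nat.mul_pos hP hN
  rw [mul_assoc k, ← hl] at hlarge hsmall
  have hperiodic' (j : ZMod J) : Function.Periodic (v j) (2 * l : ℕ) := by
    rw [hl, mul_left_comm, mul_comm, Nat.cast_mul]
    exact (hperiodic j).nat_mul _
  obtain ⟨S, hcard, hS⟩ := exists_finset_near_spectrum_concat hk b hl0 hperiodic' hη hlarge
  have hJ := NeZero.pos J
  refine ⟨concat (2 * l) v, ⟨J * (2 * l), by positivity, concat_periodic (by lia) hperiodic'⟩,
    dist_concat_le hdist _, (hasBallCover_biUnion_ball (S := S) (by positivity) ?_).mono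
      fun E hE => let ⟨j, hj⟩ := hgap E hE.2; hS E hE.1 j hj⟩
  refine lt_of_le_of_lt ?_ hsmall
  rw [mul_div_assoc', show (2 : ℝ) * 5 = 10 by norm_num]
  gcongr
  exact_mod_cast hcard.trans_eq (by ring)

theorem exists_periodic_hasBallCover (hk : 0 < k) (b : Fin (k - 1) → ℝ) (hV : IsPeriodicSeq V)
    (hε : 0 < ε) {d δ : ℝ} (hd : 0 < d) (hδ : 0 < δ) :
    ∃ W : ℤ →ᵇ ℝ, IsPeriodicSeq W ∧ dist W V ≤ ε ∧
      HasBallCover d δ (spectrum ℝ (schrodinger (boundedSieve k b W))) := by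
  let Z := (finite_setOf_stringTransfer_eq_zero k b).toFinset
  obtain ⟨τ, hτ, hZ⟩ := exists_pos_mul_rpow_lt Z.card hd (half_pos hδ)
  let U : Set ℝ := ⋃ x ∈ Z, Metric.ball x τ
  let R := ‖schrodinger (boundedSieve k b V)‖ + ε
  have hK : IsCompact (Metric.closedBall 0 R \ U) :=
    (isCompact_closedBall 0 R).diff (isOpen_biUnion fun _ _ => Metric.isOpen_ball)
  have hKb : ∀ E ∈ Metric.closedBall 0 R \ U, stringTransfer k b E 0 0 ≠ 0 := fun E hE hzero =>
    hE.2 (mem_iUnion₂.2 ⟨E, (Finite.mem_toFinset _).2 hzero, Metric.mem_ball_self hτ⟩)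
  obtain ⟨W, hW, hdist, hcover⟩ :=
    exists_periodic_hasBallCover_inter hk b hV hε hd (half_pos hδ) hK hKb
  refine ⟨W, hW, hdist, add_halves δ ▸ ((hasBallCover_biUnion_ball hτ hZ).union hcover).mono
    fun E hE => or_iff_not_imp_left.2 fun hEZ => ⟨hE, ?_, hEZ⟩⟩
  have hlip := (lipschitzWith_schrodinger.comp (lipschitzWith_boundedSieve hk b)).dist_le_mul W V
  rw [mul_one, NNReal.coe_one, one_mul, Function.comp_apply, dist_eq_norm] at hlip
  rw [mem_closedBall_zero_iff]
  exact (spectrum.norm_le_norm_of_mem hE).trans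
    ((norm_le_norm_add_norm_sub' _ _).trans (add_le_add_right (hlip.trans hdist) _))

end Density

section Genericity

variable {k : ℕ} {d δ : ℝ}

/-- The limit-periodic potentials whose sieved operator has a spectrum with a finite cover by balls
of total `d`-dimensional size below `δ`. -/
def smallCoverLPZ (k : ℕ) (b : Fin (k - 1) → ℝ) (d δ : ℝ) : Set LPZ :=
  {V | HasBallCover d δ (spectrum ℝ (schrodinger (boundedSieve k b V)))}

theorem isOpen_smallCoverLPZ (hk : 0 < k) (b : Fin (k - 1) → ℝ) (d δ : ℝ) :
    IsOpen (smallCoverLPZ k b d δ) :=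
  (isOpen_setOf_hasBallCover_spectrum d δ).preimage <| lipschitzWith_schrodinger.continuous.comp <|
    (lipschitzWith_boundedSieve hk b).continuous.comp continuous_subtype_val

theorem dense_smallCoverLPZ (hk : 0 < k) (b : Fin (k - 1) → ℝ) (hd : 0 < d) (hδ : 0 < δ) :
    Dense (smallCoverLPZ k b d δ) := by
  refine Metric.dense_iff.2 fun V ε hε => ?_
  obtain ⟨V', hV', hdist'⟩ := Metric.mem_closure_iff.1 V.2 (ε / 2) (half_pos hε)
  obtain ⟨W, hW, hdist, hcover⟩ := exists_periodic_hasBallCover hk b hV' (half_pos hε) hd hδ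
  refine ⟨⟨W, subset_closure hW⟩, ?_, hcover⟩
  calc dist W V ≤ dist W V' + dist V' V := dist_triangle _ _ _
    _ < ε / 2 + ε / 2 := add_lt_add_of_le_of_lt hdist (by rwa [dist_comm])
    _ = ε := add_halves ε

theorem interior_eq_empty_of_dimH_eq_zero {s : Set ℝ} (hs : dimH s = 0) : interior s = ∅ :=
  not_nonempty_iff_eq_empty.1 fun h => by
    simp [Real.dimH_of_nonempty_interior h] at hs

theorem isZeroDimCantor_sieveWith {V : ℤ →ᵇ ℝ} (hV : V ∈ LPZ) (hk : 0 < k) (b : Fin (k - 1) → ℝ)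
    (hcover : ∀ m l : ℕ, HasBallCover (1 / ((m : ℝ) + 1)) (1 / ((l : ℝ) + 1))
      (spectrum ℝ (schrodinger (boundedSieve k b V)))) :
    IsZeroDimCantor (SchrodingerSpectrum (sieveWith V k b)) := by
  rw [← coe_boundedSieve, schrodingerSpectrum_eq]
  have hdim := dimH_eq_zero_of_hasBallCover hcover
  exact ⟨spectrum_nonempty_of_isSelfAdjoint (isSelfAdjoint_schrodinger _), spectrum.isCompact _,
    preperfect_spectrum_schrodinger ((hasLargeAlmostPeriods_of_mem_LPZ hV).sieveWith hk b),
    interior_eq_empty_of_dimH_eq_zero hdim, hdim⟩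

end Genericity

/-- Fix `k` and a string `b ∈ ℝ^{k-1}`. For generic limit-periodic `V : ℤ → ℝ`,
the spectrum of `H_{V^{[k,b]}}` is a Cantor set of zero Hausdorff dimension. -/
theorem sieveWith_generic_zero_dim_cantor (k : ℕ) (hk : 0 < k) (b : Fin (k - 1) → ℝ) :
    ∃ R : Set LPZ, IsGδ R ∧ Dense R ∧
      ∀ V ∈ R,
        IsZeroDimCantor (SchrodingerSpectrum (sieveWith (⇑(V : ℤ →ᵇ ℝ)) k b)) := by
  have : CompleteSpace LPZ := isClosed_closure.completeSpace_coe
  let R (p : ℕ × ℕ) := smallCoverLPZ k b (1 / ((p.1 : ℝ) + 1)) (1 / ((p.2 : ℝ) + 1))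
  have hopen (p : ℕ × ℕ) : IsOpen (R p) := isOpen_smallCoverLPZ hk b _ _
  have hdense (p : ℕ × ℕ) : Dense (R p) := dense_smallCoverLPZ hk b (by positivity) (by positivity)
  exact ⟨⋂ p, R p, .iInter_of_isOpen hopen, dense_iInter_of_isOpen hopen hdense,
    fun V hV => isZeroDimCantor_sieveWith V.2 hk b fun m l => mem_iInter.1 hV (m, l)⟩
end
end

section
/- Let X be a Banach space and let A : X × ℝ → SL(2,ℝ) be an analytic map, extended to words over X by A(x♯y,E) = A(y,E)A(x,E). If A is non-ahyperbolic with exceptional set S, then A is gap-rich with exceptional set S. -/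
/-!
Fix `E`, let `F w = A(w, E)` for words `w` of length `m`, let `U` be a ball around the given word,
and let `Γ` be the monoid generated by `F(U)`; its elements are the matrices of concatenations of
words in `U`. Suppose that `Γ` contains no hyperbolic matrix.

* Two elliptic matrices in `Γ` commute. An elliptic `g` lies on the unit circle of `ℝ[g] ≅ ℂ`, so
  its powers accumulate at `g⁻¹`. The commutator of two elliptic matrices in `Γ` is therefore a
  limit of elements of `Γ`, whereas the commutator of an elliptic matrix with any matrix not
  commuting with it is hyperbolic.
* Some `F v` with `v ∈ U` is elliptic, for otherwise `(tr F)² = 4` on `U`, hence everywhere. Then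
  `F w` commutes with `F v` for all `w` near `v`, hence for all `w`.

A matrix commuting with an elliptic one is not hyperbolic, whereas `F (y ⋯ y) = A(y, E) ^ m` is
hyperbolic for a suitable letter `y`.
-/

open Set

noncomputable section

/-- `SL(2,ℝ)`. -/
abbrev SL2R := Matrix.SpecialLinearGroup (Fin 2) ℝ

/-- A matrix in SL(2,ℝ) is hyperbolic if `|tr| > 2`. -/
def IsHyperbolic (M : SL2R) : Prop :=
  2 < |Matrix.trace (M : Matrix (Fin 2) (Fin 2) ℝ)|

/-- A matrix in SL(2,ℝ) is elliptic if `|tr| < 2`. -/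
def IsElliptic (M : SL2R) : Prop :=
  |Matrix.trace (M : Matrix (Fin 2) (Fin 2) ℝ)| < 2

/-- A subset of ℝ is discrete if it has no accumulation points. -/
def IsDiscreteSet (S : Set ℝ) : Prop := ∀ x : ℝ, ¬ AccPt x (Filter.principal S)

/-- Extension of `A` to words: `A(y₁⋯y_m, E) = A(y_m,E) ⋯ A(y₁,E)`. -/
def wordProd {X : Type*} (A : X → ℝ → SL2R) {m : ℕ} (y : Fin m → X) (E : ℝ) : SL2R :=
  ((List.ofFn fun i => A (y i) E).reverse).prod

/-- `A : X × ℝ → SL(2,ℝ)` is non-ahyperbolic with exceptional set `S`: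
`S` is discrete and for every `E ∉ S` some `A(y,E)` is hyperbolic. -/
def NonAhyperbolic {X : Type*} (A : X → ℝ → SL2R) (S : Set ℝ) : Prop :=
  IsDiscreteSet S ∧ ∀ E : ℝ, E ∉ S → ∃ y : X, IsHyperbolic (A y E)

/-- Periodic extension `w^{♯ℤ}` of a finite word `w`. -/
def perExt {α : Type*} [Zero α] {m : ℕ} (w : Fin m → α) : ℤ → α :=
  fun n =>
    if h : 0 < m then
      w ⟨(n % (m : ℤ)).toNat, by
        have h1 : 0 ≤ n % (m : ℤ) := Int.emod_nonneg n (by exact_mod_cast h.ne')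
        have h2 : n % (m : ℤ) < (m : ℤ) := Int.emod_lt_of_pos n (by exact_mod_cast h)
        omega⟩
    else 0

/-- `A : X × ℝ → SL(2,ℝ)` is gap-rich with exceptional set `S`: `S` is discrete
and for every `E ∉ S`, any word over `X` can be perturbed (in the uniform metric
on periodic extensions) to a word whose matrix at `E` is hyperbolic. -/
def GapRichMap {X : Type*} [NormedAddCommGroup X] (A : X → ℝ → SL2R) (S : Set ℝ) : Prop :=
  IsDiscreteSet S ∧
  ∀ E : ℝ, E ∉ S → ∀ m : ℕ, 0 < m → ∀ x : Fin m → X, ∀ ε : ℝ, 0 < ε →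
    ∃ l : ℕ, 0 < l ∧ ∃ y : Fin l → X,
      (∀ j : ℤ, dist (perExt x j) (perExt y j) < ε) ∧
      IsHyperbolic (wordProd A y E)

/-! ### Elliptic matrices -/

section Elliptic

open Filter Topology
open Matrix hiding IsElliptic IsHyperbolic
open scoped commutatorElement

theorem isElliptic_iff_matrix_isElliptic {M : SL2R} :
    IsElliptic M ↔ (M : Matrix _ _ ℝ).IsElliptic := by
  rw [IsElliptic, Matrix.IsElliptic, discr_fin_two, M.det_coe,
    ← sq_lt_sq₀ (abs_nonneg _) zero_le_two, sq_abs, sub_neg]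
  norm_num

theorem isHyperbolic_iff_matrix_isHyperbolic {M : SL2R} :
    IsHyperbolic M ↔ (M : Matrix _ _ ℝ).IsHyperbolic := by
  rw [IsHyperbolic, Matrix.IsHyperbolic, discr_fin_two, M.det_coe,
    ← sq_lt_sq₀ zero_le_two (abs_nonneg _), sq_abs, sub_pos]
  norm_num

section OrderedRing

variable {R : Type*} [CommRing R] [LinearOrder R] [IsStrictOrderedRing R]
  {g h N : Matrix (Fin 2) (Fin 2) R}

/- On the traceless matrices `-det` is a quadratic form of signature `(2, 1)`. It is negative on the
traceless part of an elliptic `g`, hence positive definite on the orthogonal complement. -/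
theorem det_neg_of_trace_isElliptic_mul_eq_zero (hg : g.IsElliptic) (hN : N.trace = 0)
    (hgN : (g * N).trace = 0) (hN₀ : N ≠ 0) : N.det < 0 := by
  have hc := hg.c_ne_zero
  rw [Matrix.IsElliptic, discr_fin_two, trace_fin_two, det_fin_two] at hg
  rw [trace_fin_two] at hN
  simp only [trace_fin_two, mul_apply, Fin.sum_univ_two] at hgN
  have hN₁₁ : N 1 1 = -N 0 0 := by linear_combination hN
  have hdiag : g 1 0 * N 0 1 = -(g 0 0 - g 1 1) * N 0 0 - g 0 1 * N 1 0 := by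
    linear_combination hgN - g 1 1 * hN
  have key : 4 * g 1 0 ^ 2 * -N.det = (2 * g 1 0 * N 0 0 - (g 0 0 - g 1 1) * N 1 0) ^ 2 +
      -((g 0 0 + g 1 1) ^ 2 - 4 * (g 0 0 * g 1 1 - g 0 1 * g 1 0)) * N 1 0 ^ 2 := by
    rw [det_fin_two, hN₁₁]
    linear_combination 4 * g 1 0 * N 1 0 * hdiag
  suffices h : 0 < 4 * g 1 0 ^ 2 * -N.det from
    neg_pos.1 (pos_of_mul_pos_right h (by positivity))
  rw [key]
  rcases eq_or_ne (N 1 0) 0 with hr | hr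
  · have hp : N 0 0 ≠ 0 := by
      intro hp
      have hq : N 0 1 = 0 := by simpa [hr, hp, hc] using hdiag
      exact hN₀ (by ext i j; fin_cases i <;> fin_cases j <;> simp [hN₁₁, hp, hq, hr])
    simp only [hr, mul_zero, sub_zero, ne_eq, OfNat.ofNat_ne_zero, not_false_eq_true, zero_pow,
      add_zero]
    positivity
  · exact add_pos_of_nonneg_of_pos (sq_nonneg _) (mul_pos (neg_pos.2 hg) (by positivity))

theorem not_matrix_isHyperbolic_of_commute (hg : g.IsElliptic) (hgh : Commute g h) :
    ¬ h.IsHyperbolic := by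
  have hc := hg.c_ne_zero
  rw [Matrix.IsElliptic, discr_fin_two, trace_fin_two, det_fin_two] at hg
  rw [Matrix.IsHyperbolic, discr_fin_two, trace_fin_two, det_fin_two, not_lt]
  have h₀₀ := congr_fun₂ hgh.eq 0 0
  have h₁₀ := congr_fun₂ hgh.eq 1 0
  simp only [mul_apply, Fin.sum_univ_two] at h₀₀ h₁₀
  have key : g 1 0 ^ 2 * ((h 0 0 + h 1 1) ^ 2 - 4 * (h 0 0 * h 1 1 - h 0 1 * h 1 0)) =
      h 1 0 ^ 2 * ((g 0 0 + g 1 1) ^ 2 - 4 * (g 0 0 * g 1 1 - g 0 1 * g 1 0)) := by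
    linear_combination (g 1 0 * (h 0 0 - h 1 1) + h 1 0 * (g 0 0 - g 1 1)) * h₁₀ -
      4 * g 1 0 * h 1 0 * h₀₀
  refine nonpos_of_mul_nonpos_right (key ▸ ?_) (sq_pos_of_ne_zero hc)
  exact mul_nonpos_of_nonneg_of_nonpos (sq_nonneg _) hg.le

end OrderedRing

theorem det_sub_one_fin_two {R : Type*} [CommRing R] (M : Matrix (Fin 2) (Fin 2) R) :
    (M - 1).det = M.det - M.trace + 1 := by
  simp only [det_fin_two, trace_fin_two, Matrix.sub_apply, one_apply_eq, ne_eq, zero_ne_one,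
    one_ne_zero, not_false_eq_true, one_apply_ne, sub_zero]
  ring

theorem IsElliptic.not_isHyperbolic_of_commute {g h : SL2R} (hg : IsElliptic g)
    (hgh : Commute g h) : ¬ IsHyperbolic h := by
  rw [isHyperbolic_iff_matrix_isHyperbolic]
  rw [isElliptic_iff_matrix_isElliptic] at hg
  exact not_matrix_isHyperbolic_of_commute hg (congrArg Subtype.val hgh.eq)

theorem IsElliptic.isHyperbolic_commutator {g h : SL2R} (hg : IsElliptic g)
    (hgh : ¬ Commute g h) : IsHyperbolic ⁅g, h⁆ := by
  set N : Matrix (Fin 2) (Fin 2) ℝ := g * h - h * g with hN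
  have hcomm : ⁅g, h⁆ * (h * g) = g * h := by rw [commutatorElement_def]; group
  have hfactor : N = (⁅g, h⁆.1 - 1) * (h * g).1 := by
    rw [sub_mul, one_mul, hN]
    exact congrArg (· - (h * g).1) (congrArg Subtype.val hcomm.symm)
  have hdet : N.det = 2 - ⁅g, h⁆.1.trace := by
    rw [hfactor, det_mul, (h * g).2, det_sub_one_fin_two, ⁅g, h⁆.2]
    ring
  have htrace : N.trace = 0 := by rw [trace_sub, trace_mul_comm, sub_self]
  have htrace_mul : (g.1 * N).trace = 0 := by
    rw [hN, mul_sub, trace_sub, ← mul_assoc g.1 h.1 g.1, trace_mul_comm (g.1 * h.1), sub_self]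
  have hN₀ : N ≠ 0 := fun h₀ => hgh (Subtype.ext (sub_eq_zero.1 h₀))
  have hdet_neg : N.det < 0 := det_neg_of_trace_isElliptic_mul_eq_zero
    (isElliptic_iff_matrix_isElliptic.1 hg) htrace htrace_mul hN₀
  exact lt_abs.2 (Or.inl (by linarith))

theorem exists_algHom_complex_of_isElliptic {g : Matrix (Fin 2) (Fin 2) ℝ} (hg : g.IsElliptic) :
    ∃ (φ : ℂ →ₐ[ℝ] Matrix (Fin 2) (Fin 2) ℝ) (z : ℂ), φ z = g ∧ Complex.normSq z = g.det := by
  have hd : 0 < -g.discr := neg_pos.2 hg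
  obtain ⟨s, hs₀, hs⟩ : ∃ s : ℝ, s ≠ 0 ∧ s ^ 2 = -g.discr :=
    ⟨√(-g.discr), (Real.sqrt_pos.2 hd).ne', Real.sq_sqrt hd.le⟩
  set J := (2 / s) • (g - scalar (Fin 2) (g.trace / 2)) with hJ
  have hJJ : J * J = -1 := by
    have hcoeff : 2 / s * (2 / s) * (-s ^ 2 / 4) = -1 := by
      field_simp
      norm_num
    rw [hJ, smul_mul_smul_comm, ← sq (_ - _), sub_scalar_sq_eq_discr, ← neg_neg g.discr, ← hs,
      scalar_apply, ← smul_one_eq_diagonal, smul_smul, hcoeff, neg_one_smul]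
  refine ⟨Complex.lift ⟨J, hJJ⟩, ⟨g.trace / 2, s / 2⟩, ?_, ?_⟩
  · have him : (s / 2) • J = g - scalar (Fin 2) (g.trace / 2) := by
      rw [hJ, smul_smul, div_mul_div_comm, mul_comm s 2, div_self (by positivity), one_smul]
    rw [Complex.lift_apply, Complex.liftAux_apply, him]
    exact add_sub_cancel _ _
  · rw [discr_fin_two] at hs
    rw [Complex.normSq_mk]
    linear_combination hs / 4

theorem IsElliptic.inv_mem_closure_powers {g : SL2R} (hg : IsElliptic g) :
    g⁻¹ ∈ closure (Submonoid.powers g : Set SL2R) := by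
  obtain ⟨φ, z, hφz, hz⟩ :=
    exists_algHom_complex_of_isElliptic (isElliptic_iff_matrix_isElliptic.1 hg)
  have hz_norm : ‖z‖ = 1 := by
    rw [← pow_eq_one_iff_of_nonneg (norm_nonneg z) two_ne_zero, ← Complex.normSq_eq_norm_sq, hz,
      g.det_coe]
  let c : Circle := ⟨z, mem_sphere_zero_iff_norm.2 hz_norm⟩
  have hpow (n : ℕ) : φ ((c ^ n : Circle) : ℂ) = (g ^ n).1 := by
    rw [Circle.coe_pow, map_pow]
    exact (congrArg (· ^ n) hφz).trans (Matrix.SpecialLinearGroup.coe_pow g n).symm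
  have hinv : φ ((c⁻¹ : Circle) : ℂ) = g⁻¹.1 := by
    refine left_inv_eq_right_inv (a := g.1) ?_ (congrArg Subtype.val (mul_inv_cancel g))
    rw [← hφz, ← map_mul, Circle.coe_inv, inv_mul_cancel₀ c.coe_ne_zero, map_one]
  have hcont : Continuous fun c : Circle => φ (c : ℂ) :=
    (φ.toLinearMap.continuous_of_finiteDimensional).comp continuous_subtype_val
  have hc : c⁻¹ ∈ closure (range (c ^ · : ℕ → Circle)) := by
    refine ((mapClusterPt_atTop_pow_tfae c⁻¹ c).out 0 2).1 ?_
    simpa using mapClusterPt_self_zpow_atTop_pow c (-1)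
  have hmem : g⁻¹.1 ∈ closure (Subtype.val '' (Submonoid.powers g : Set SL2R)) := by
    rw [← hinv]
    refine map_mem_closure (f := fun c : Circle => φ c) hcont hc ?_
    rintro _ ⟨n, rfl⟩
    exact ⟨g ^ n, ⟨n, rfl⟩, (hpow n).symm⟩
  exact (IsInducing.subtypeVal.closure_eq_preimage_closure_image _).ge hmem

theorem continuous_abs_trace : Continuous fun M : SL2R => |M.1.trace| :=
  (continuous_subtype_val.matrix_trace).abs

theorem isOpen_setOf_isHyperbolic : IsOpen {M | IsHyperbolic M} :=
  isOpen_lt continuous_const continuous_abs_trace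

theorem isOpen_setOf_isElliptic : IsOpen {M | IsElliptic M} :=
  isOpen_lt continuous_abs_trace continuous_const

theorem commute_of_isElliptic_of_forall_not_isHyperbolic {Γ : Submonoid SL2R}
    (hΓ : ∀ M ∈ Γ, ¬ IsHyperbolic M) {g h : SL2R} (hg : g ∈ Γ) (hh : h ∈ Γ)
    (hge : IsElliptic g) (hhe : IsElliptic h) : Commute g h := by
  by_contra hgh
  have hle := Γ.le_topologicalClosure
  have hinv {k : SL2R} (hk : k ∈ Γ) (hke : IsElliptic k) : k⁻¹ ∈ Γ.topologicalClosure :=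
    closure_mono (Submonoid.powers_le.2 hk) hke.inv_mem_closure_powers
  have hcomm : ⁅g, h⁆ ∈ Γ.topologicalClosure :=
    mul_mem (mul_mem (mul_mem (hle hg) (hle hh)) (hinv hg hge)) (hinv hh hhe)
  obtain ⟨M, hM, hMΓ⟩ :=
    mem_closure_iff.1 hcomm _ isOpen_setOf_isHyperbolic (hge.isHyperbolic_commutator hgh)
  exact hΓ M hMΓ hM

end Elliptic

/-! ### Powers of hyperbolic matrices -/

theorem trace_pow_add_two {R : Type*} [CommRing R] (M : Matrix (Fin 2) (Fin 2) R) (k : ℕ) :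
    (M ^ (k + 2)).trace = M.trace * (M ^ (k + 1)).trace - M.det * (M ^ k).trace := by
  nontriviality R
  have hCH := M.aeval_self_charpoly
  simp only [Matrix.charpoly_fin_two, map_add, map_sub, map_mul, map_pow, Polynomial.aeval_X,
    Polynomial.aeval_C] at hCH
  have hsq : M ^ 2 = M.trace • M - M.det • 1 := by
    simpa [Algebra.algebraMap_eq_smul_one, sub_add, sub_eq_zero] using hCH
  rw [pow_add, hsq, mul_sub, mul_smul_comm, ← pow_succ]
  simp

theorem IsHyperbolic.abs_trace_pow_lt_succ {M : SL2R} (hM : IsHyperbolic M) (k : ℕ) :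
    |(M.1 ^ k).trace| < |(M.1 ^ (k + 1)).trace| := by
  induction k with
  | zero => simpa [IsHyperbolic] using hM
  | succ k ih =>
    have hmul : 2 * |(M.1 ^ (k + 1)).trace| ≤ |M.1.trace * (M.1 ^ (k + 1)).trace| := by
      rw [abs_mul]
      exact mul_le_mul_of_nonneg_right hM.le (abs_nonneg _)
    have hsub := abs_sub_abs_le_abs_sub (M.1.trace * (M.1 ^ (k + 1)).trace) (M.1 ^ k).trace
    rw [trace_pow_add_two, M.2, one_mul]
    linarith

theorem IsHyperbolic.pow {M : SL2R} (hM : IsHyperbolic M) {n : ℕ} (hn : 0 < n) :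
    IsHyperbolic (M ^ n) := by
  simpa [IsHyperbolic] using strictMono_nat_of_lt_succ hM.abs_trace_pow_lt_succ hn

/-! ### Analytic families of matrices -/

section Analytic

open Filter Topology

variable {V W : Type*} [NormedAddCommGroup V] [NormedSpace ℝ V] [NormedAddCommGroup W]
  [NormedSpace ℝ W]

/-- A map from a real normed space to `SL(2,ℝ)` is analytic. Analyticity is required of the four
matrix entries because `SL(2,ℝ)` is not a normed space. -/
def EntrywiseAnalytic (F : W → SL2R) : Prop :=
  ∀ i j, AnalyticOnNhd ℝ (fun w => (F w : Matrix (Fin 2) (Fin 2) ℝ) i j) univ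

namespace EntrywiseAnalytic

variable {F G : W → SL2R}

theorem const (M : SL2R) : EntrywiseAnalytic fun _ : W => M :=
  fun _ _ => analyticOnNhd_const

theorem mul (hF : EntrywiseAnalytic F) (hG : EntrywiseAnalytic G) :
    EntrywiseAnalytic fun w => F w * G w := by
  intro i j
  simp only [Matrix.SpecialLinearGroup.coe_mul, Matrix.mul_apply, Fin.sum_univ_two]
  exact ((hF i 0).mul (hG 0 j)).add ((hF i 1).mul (hG 1 j))

theorem comp (hF : EntrywiseAnalytic F) {f : V → W} (hf : AnalyticOnNhd ℝ f univ) :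
    EntrywiseAnalytic fun v => F (f v) :=
  fun i j => (hF i j).comp hf (mapsTo_univ _ _)

theorem continuous (hF : EntrywiseAnalytic F) : Continuous F :=
  continuous_induced_rng.2 <| continuous_matrix fun i j => (hF i j).continuous

theorem trace (hF : EntrywiseAnalytic F) : AnalyticOnNhd ℝ (fun w => (F w).1.trace) univ := by
  simp only [Matrix.trace_fin_two]
  exact (hF 0 0).add (hF 1 1)

theorem eq_of_eventuallyEq (hF : EntrywiseAnalytic F) (hG : EntrywiseAnalytic G) {w : W}
    (h : F =ᶠ[𝓝 w] G) : F = G := by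
  funext v
  ext i j
  refine congr_fun ((hF i j).eq_of_eventuallyEq (hG i j) (z₀ := w) ?_) v
  filter_upwards [h] with u hu
  rw [hu]

theorem exists_isElliptic (hF : EntrywiseAnalytic F) {w : W} (hw : IsHyperbolic (F w)) {U : Set W}
    (hU : IsOpen U) (hne : U.Nonempty) (hFU : ∀ v ∈ U, ¬ IsHyperbolic (F v)) :
    ∃ v ∈ U, IsElliptic (F v) := by
  by_contra! hell
  obtain ⟨v, hv⟩ := hne
  have hsq : (fun u => (F u).1.trace ^ 2) =ᶠ[𝓝 v] fun _ => 2 ^ 2 := by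
    filter_upwards [hU.mem_nhds hv] with u hu
    rw [← sq_abs, le_antisymm (not_lt.1 (hFU u hu)) (not_lt.1 (hell u hu))]
  have hsq_w := congr_fun ((hF.trace.pow 2).eq_of_eventuallyEq analyticOnNhd_const hsq) w
  rw [IsHyperbolic, ← sq_lt_sq₀ zero_le_two (abs_nonneg _), sq_abs] at hw
  exact hw.ne' hsq_w

theorem exists_isHyperbolic_mem_closure_image (hF : EntrywiseAnalytic F) {w : W}
    (hw : IsHyperbolic (F w)) {U : Set W} (hU : IsOpen U) (hne : U.Nonempty) :
    ∃ M ∈ Submonoid.closure (F '' U), IsHyperbolic M := by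
  by_contra! hΓ
  have hmem {v : W} (hv : v ∈ U) : F v ∈ Submonoid.closure (F '' U) :=
    Submonoid.subset_closure (mem_image_of_mem F hv)
  obtain ⟨v, hv, hell⟩ := hF.exists_isElliptic hw hU hne fun v hv => hΓ _ (hmem hv)
  have hcomm_near : (fun u => F v * F u) =ᶠ[𝓝 v] fun u => F u * F v := by
    filter_upwards [hU.mem_nhds hv,
      (isOpen_setOf_isElliptic.preimage hF.continuous).mem_nhds hell] with u hu hu_ell
    exact commute_of_isElliptic_of_forall_not_isHyperbolic hΓ (hmem hv) (hmem hu) hell hu_ell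
  have hcomm : Commute (F v) (F w) :=
    congr_fun (((const (F v)).mul hF).eq_of_eventuallyEq (hF.mul (const (F v))) hcomm_near) w
  exact hell.not_isHyperbolic_of_commute hcomm hw

end EntrywiseAnalytic

end Analytic

/-! ### Words -/

section Words

variable {X : Type*} {m n : ℕ}

theorem wordProd_const (A : X → ℝ → SL2R) (m : ℕ) (y : X) (E : ℝ) :
    wordProd A (fun _ : Fin m => y) E = A y E ^ m := by
  simp [wordProd]

theorem wordProd_succ (A : X → ℝ → SL2R) (w : Fin (m + 1) → X) (E : ℝ) :
    wordProd A w E = wordProd A (Fin.tail w) E * A (w 0) E := by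
  simp [wordProd, List.ofFn_succ, Fin.tail]

theorem EntrywiseAnalytic.wordProd [NormedAddCommGroup X] [NormedSpace ℝ X] {A : X → ℝ → SL2R}
    {E : ℝ} (hA : EntrywiseAnalytic fun y => A y E) :
    EntrywiseAnalytic fun w : Fin m → X => wordProd A w E := by
  induction m with
  | zero => exact const 1
  | succ m ih =>
    simp only [wordProd_succ]
    let tail : (Fin (m + 1) → X) →L[ℝ] (Fin m → X) :=
      .pi fun i => .proj (R := ℝ) (φ := fun _ => X) i.succ
    let head : (Fin (m + 1) → X) →L[ℝ] X := .proj 0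
    exact (ih.comp (tail.analyticOnNhd univ)).mul (hA.comp (head.analyticOnNhd univ))

/-- The concatenation of the words `u 0, …, u (n - 1)` of common length `m`. -/
def concatWord (u : Fin n → Fin m → X) : Fin (n * m) → X :=
  fun i => u i.divNat i.modNat

theorem wordProd_concatWord (A : X → ℝ → SL2R) (E : ℝ) (u : Fin n → Fin m → X) :
    wordProd A (concatWord u) E = (List.ofFn fun i => wordProd A (u i) E).reverse.prod := by
  have hblock (i : Fin n) (j : Fin m) (h) : concatWord u ⟨i * m + j, h⟩ = u i j := by
    have hij : ⟨i * m + j, h⟩ = Fin.mkDivMod i j :=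
      Fin.ext (congrArg (· + (j : ℕ)) (mul_comm _ _))
    rw [hij, concatWord, Fin.divNat_mkDivMod, Fin.modNat_mkDivMod]
  simp only [wordProd, List.ofFn_mul, List.reverse_flatten, List.prod_flatten, List.map_reverse,
    List.map_ofFn, Function.comp_def, hblock]

theorem exists_wordProd_concatWord_eq (A : X → ℝ → SL2R) (E : ℝ) {U : Set (Fin m → X)} {M : SL2R}
    (hM : M ∈ Submonoid.closure ((fun w => wordProd A w E) '' U)) :
    ∃ (n : ℕ) (u : Fin n → Fin m → X), (∀ i, u i ∈ U) ∧ wordProd A (concatWord u) E = M := by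
  obtain ⟨l, hl, rfl⟩ := Submonoid.exists_list_of_mem_closure hM
  have hmem (i) : l.reverse.get i ∈ (fun w => wordProd A w E) '' U :=
    hl _ (List.mem_reverse.1 (List.get_mem _ i))
  choose u huU hu using hmem
  refine ⟨_, u, huU, ?_⟩
  rw [wordProd_concatWord]
  simp only [hu, List.ofFn_get, List.reverse_reverse]

theorem perExt_concatWord [Zero X] (hn : 0 < n) (hm : 0 < m) (u : Fin n → Fin m → X) (j : ℤ) :
    ∃ i, perExt (concatWord u) j = perExt (u i) j := by
  simp only [perExt, hm, Nat.mul_pos hn hm, dif_pos, concatWord]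
  refine ⟨_, congrArg _ (Fin.ext ?_)⟩
  have hmod : (j % (n * m : ℕ)).toNat % m = (j % m).toNat := by
    rw [← Int.natCast_inj, Int.natCast_mod, Int.toNat_of_nonneg (Int.emod_nonneg j (by positivity)),
      Int.toNat_of_nonneg (Int.emod_nonneg j (by positivity))]
    exact Int.emod_emod_of_dvd j (mod_cast dvd_mul_left m n)
  exact hmod

theorem dist_perExt_le [PseudoMetricSpace X] [Zero X] (x y : Fin m → X) (j : ℤ) :
    dist (perExt x j) (perExt y j) ≤ dist x y := by
  unfold perExt
  split_ifs
  · exact dist_le_pi_dist x y _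
  · rw [dist_self]
    exact dist_nonneg

end Words

theorem nonAhyperbolic_gapRich_general {X : Type*} [NormedAddCommGroup X] [NormedSpace ℝ X]
    {A : X → ℝ → SL2R} (hA : ∀ E, EntrywiseAnalytic fun y => A y E) {S : Set ℝ}
    (hNA : NonAhyperbolic A S) : GapRichMap A S := by
  refine ⟨hNA.1, fun E hE m hm x ε hε => ?_⟩
  obtain ⟨y, hy⟩ := hNA.2 E hE
  have hconst : IsHyperbolic (wordProd A (fun _ : Fin m => y) E) := by
    rw [wordProd_const]
    exact hy.pow hm
  obtain ⟨M, hM, hMhyp⟩ := (hA E).wordProd.exists_isHyperbolic_mem_closure_image hconst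
    Metric.isOpen_ball ⟨x, Metric.mem_ball_self hε⟩
  obtain ⟨n, u, hu, rfl⟩ := exists_wordProd_concatWord_eq A E hM
  have hn : 0 < n := by
    rw [Nat.pos_iff_ne_zero]
    rintro rfl
    simp [wordProd_concatWord, IsHyperbolic] at hMhyp
  refine ⟨n * m, Nat.mul_pos hn hm, concatWord u, fun j => ?_, hMhyp⟩
  obtain ⟨i, hi⟩ := perExt_concatWord hn hm u j
  rw [hi]
  exact (dist_perExt_le x (u i) j).trans_lt (Metric.mem_ball'.1 (hu i))

/-- If `X` is a Banach space and `A : X × ℝ → SL(2,ℝ)` is analytic and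
non-ahyperbolic with exceptional set `S`, then `A` is gap-rich with
exceptional set `S`. -/
theorem nonAhyperbolic_gapRich {X : Type*}
    [NormedAddCommGroup X] [NormedSpace ℝ X] [CompleteSpace X]
    (A : X → ℝ → SL2R)
    (hA : ∀ i j : Fin 2,
      AnalyticOnNhd ℝ
        (fun p : X × ℝ => (A p.1 p.2 : Matrix (Fin 2) (Fin 2) ℝ) i j) Set.univ)
    (S : Set ℝ) (hNA : NonAhyperbolic A S) :
    GapRichMap A S :=
  nonAhyperbolic_gapRich_general
    (fun _ i j => (hA i j).comp (analyticOnNhd_id.prod analyticOnNhd_const) (mapsTo_univ _ _)) hNA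
end
end
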